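/- Let F(T) ∈ ℤ[T] be a nonconstant polynomial of degree D with no multiple roots. Let ℓ be an odd prime with ℓ > 2D + 1 that does not divide the leading coefficient of F and does not divide the discriminant of T·F(T) (the discriminant of F if F(0) = 0). Let e ≥ 1 and J ≥ D + 2 be integers and let w be a unit modulo ℓ^e. Set V = #{(v₁, …, v_J) ∈ ((ℤ/ℓ^eℤ)^×)^J : ∏_{i=1}^J F(v_i) ≡ w (mod ℓ^e)}. Then |φ(ℓ^e)·V − (φ(ℓ^e)·α(ℓ^e))^J| ≤ 2·(4D)^J·ℓ^{1 − J/(D+1)}·(φ(ℓ^e)·α(ℓ^e))^J. -/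

import Mathlib

/-- `α(q) = (1/φ(q)) · #{a mod q : gcd(a·F(a), q) = 1}`. -/
noncomputable def alpha (F : Polynomial ℤ) (q : ℕ) : ℝ :=
  (Set.ncard {a : ℕ | a < q ∧ Int.gcd ((a : ℤ) * F.eval (a : ℤ)) (q : ℤ) = 1} : ℝ)
    / (Nat.totient q : ℝ)

/-!
By orthogonality of the characters modulo `ℓ ^ e`, the number of solutions times `φ(ℓ ^ e)` is
`∑ χ, χ⁻¹(w) S(χ) ^ J` with `S(χ) = ∑ u, χ (F u)`, and the trivial character gives the main term.
If `χ` has conductor `ℓ ^ m` with `m ≥ 1`, then `|S(χ)| ≤ D ℓ ^ e / ℓ ^ (m / (D + 1))`. As there are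
at most `ℓ ^ m` such `χ` and `J ≥ D + 2`, their contributions are bounded by a convergent geometric
series in `m`.

For `m = 1` the bound on `S(χ)` is Weil's. For monic `f` over a field with `q` elements, the
L-function `∑ g, χ (Res(g, f)) T ^ deg g`, with `g` running over monic polynomials, is a polynomial
of degree less than `deg f`. By Newton's identities the sums `∑ x, χ (N (f x))` over the extensions
of the field are, up to sign, power sums of its inverse roots. Stepanov's method bounds these power
sums for the multiples of a fixed even degree, so each inverse root has absolute value at most `√q`.

For `m ≥ 2`, expand `F (a + ℓ y) = F a + ℓ ^ t H y` with `H` nonconstant modulo `ℓ`. Here `t - 1` is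
at most the multiplicity of `a` as a root of `F'` modulo `ℓ`, and the sum over `y` vanishes if that
multiplicity is `0`. Each of the few remaining sums has the same shape, and uses up at most `D`
digits of the conductor for the factor `ℓ` that is saved.
-/

open Polynomial Finset.HasAntidiagonal

/-! ### Power sums -/

lemma exists_norm_sum_eval_mul_pow_le {𝕜 : Type*} [NormedField 𝕜] (s : Multiset 𝕜) {C ρ : ℝ}
    (h : ∀ n : ℕ, 1 ≤ n → ‖(s.map (· ^ n)).sum‖ ≤ C * ρ ^ n) (Q : 𝕜[X]) :
    ∃ B : ℝ, ∀ n : ℕ, 1 ≤ n → ‖(s.map fun z ↦ Q.eval z * z ^ n).sum‖ ≤ B * ρ ^ n := by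
  induction Q using Polynomial.induction_on' with
  | add P Q hP hQ =>
    obtain ⟨A, hA⟩ := hP
    obtain ⟨B, hB⟩ := hQ
    refine ⟨A + B, fun n hn ↦ ?_⟩
    simp only [eval_add, add_mul, Multiset.sum_map_add]
    exact (norm_add_le _ _).trans (add_le_add (hA n hn) (hB n hn))
  | monomial k a =>
    refine ⟨‖a‖ * C * ρ ^ k, fun n hn ↦ ?_⟩
    calc ‖(s.map fun z ↦ (monomial k a).eval z * z ^ n).sum‖
        = ‖a‖ * ‖(s.map (· ^ (k + n))).sum‖ := by
          simp only [eval_monomial, mul_assoc, ← pow_add, Multiset.sum_map_mul_left, norm_mul]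
      _ ≤ ‖a‖ * (C * ρ ^ (k + n)) :=
          mul_le_mul_of_nonneg_left (h _ (by lia)) (norm_nonneg a)
      _ = ‖a‖ * C * ρ ^ k * ρ ^ n := by ring

lemma norm_le_of_norm_powerSum_le {𝕜 : Type*} [NormedField 𝕜] [CharZero 𝕜] {s : Multiset 𝕜}
    {C ρ : ℝ} (hρ : 0 < ρ) (h : ∀ n : ℕ, 1 ≤ n → ‖(s.map (· ^ n)).sum‖ ≤ C * ρ ^ n)
    {z : 𝕜} (hz : z ∈ s) : ‖z‖ ≤ ρ := by
  classical
  -- An interpolating polynomial isolates the contribution of `z` to the power sums.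
  let Q : 𝕜[X] := Lagrange.interpolate s.toFinset id (Pi.single z 1)
  have hQ : ∀ w ∈ s, Q.eval w = (Pi.single z 1 : 𝕜 → 𝕜) w := fun w hw ↦
    Lagrange.eval_interpolate_at_node _ (Set.injOn_id _) (Multiset.mem_toFinset.2 hw)
  have hsum (n : ℕ) : (s.map fun w ↦ Q.eval w * w ^ n).sum = s.count z * z ^ n := by
    rw [Multiset.map_congr rfl fun w hw ↦ congrArg (· * w ^ n) (hQ w hw),
      Finset.sum_multiset_map_count, Finset.sum_eq_single_of_mem z (Multiset.mem_toFinset.2 hz)]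
    · simp
    · intro w _ hw
      simp [hw]
  obtain ⟨B, hB⟩ := exists_norm_sum_eval_mul_pow_le s h Q
  have hcount : 0 < ‖(s.count z : 𝕜)‖ := by
    simpa [norm_pos_iff, Multiset.count_eq_zero] using hz
  by_contra! hlt
  obtain ⟨n, hn, hn1⟩ := ((tendsto_pow_atTop_atTop_of_one_lt
    ((one_lt_div hρ).2 hlt)).eventually_gt_atTop (B / ‖(s.count z : 𝕜)‖)).and
    (Filter.eventually_ge_atTop 1) |>.exists
  rw [div_pow, div_lt_div_iff₀ hcount (by positivity)] at hn
  have := hB n hn1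
  rw [hsum, norm_mul, norm_pow] at this
  linarith

lemma norm_le_of_norm_powerSum_mul_le {𝕜 : Type*} [NormedField 𝕜] [CharZero 𝕜] {s : Multiset 𝕜}
    {C ρ : ℝ} (hρ : 0 < ρ) {N : ℕ} (hN : N ≠ 0)
    (h : ∀ n : ℕ, 1 ≤ n → ‖(s.map (· ^ (N * n))).sum‖ ≤ C * ρ ^ (N * n))
    {z : 𝕜} (hz : z ∈ s) : ‖z‖ ≤ ρ := by
  have hzN : ‖z ^ N‖ ≤ ρ ^ N :=
    norm_le_of_norm_powerSum_le (s := s.map (· ^ N)) (C := C) (pow_pos hρ N)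
      (fun n hn ↦ by simpa [Multiset.map_map, Function.comp_def, ← pow_mul] using h n hn)
      (Multiset.mem_map_of_mem _ hz)
  rw [norm_pow] at hzN
  exact (pow_le_pow_iff_left₀ (norm_nonneg z) hρ.le hN).1 hzN

lemma succ_mul_neg_one_pow_mul_esymm_eq_sum {R : Type*} [CommRing R] (s : Multiset R) (n : ℕ) :
    ((n + 1 : ℕ) : R) * ((-1) ^ (n + 1) * s.esymm (n + 1)) =
      ∑ x ∈ antidiagonal n, (-1) ^ x.1 * s.esymm x.1 * -(s.map (· ^ (x.2 + 1))).sum := by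
  classical
  have hpsum (k : ℕ) : MvPolynomial.aeval (fun x : s ↦ (x : R)) (MvPolynomial.psum s R k) =
      (s.map (· ^ k)).sum := by
    rw [MvPolynomial.psum, map_sum, ← Finset.sum_map_val]
    simp_rw [map_pow, MvPolynomial.aeval_X]
    exact congrArg Multiset.sum (s.map_univ (· ^ k))
  have newton := congrArg (MvPolynomial.aeval fun x : s ↦ (x : R))
    (MvPolynomial.mul_esymm_eq_sum s R (n + 1))
  rw [Finset.sum_filter, Finset.Nat.sum_antidiagonal_succ', if_neg (lt_irrefl _),
    zero_add] at newton
  simp only [map_mul, map_sum, map_pow, map_neg, map_one, map_natCast,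
    MvPolynomial.aeval_esymm_eq_multiset_esymm, Multiset.map_univ_coe] at newton
  rw [mul_left_comm, newton, ← mul_assoc, ← pow_add, Odd.neg_one_pow (by grind), neg_one_mul,
    ← Finset.sum_neg_distrib]
  refine Finset.sum_congr rfl fun x hx ↦ ?_
  rw [if_pos (Nat.lt_succ_of_le (antidiagonal.fst_le hx))]
  simp only [map_mul, map_pow, map_neg, map_one, hpsum,
    MvPolynomial.aeval_esymm_eq_multiset_esymm, Multiset.map_univ_coe, mul_neg]

lemma exists_multiset_esymm_eq {K : Type*} [Field K] [IsAlgClosed K] {d : ℕ} {c : ℕ → K}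
    (h0 : c 0 = 1) (hc : ∀ n, d < n → c n = 0) :
    ∃ s : Multiset K, Multiset.card s = d ∧ ∀ n, c n = (-1) ^ n * s.esymm n := by
  let P : K[X] := ∑ k ∈ Finset.range (d + 1), monomial k (c (d - k))
  have hcoeff {k : ℕ} (hk : k ≤ d) : P.coeff k = c (d - k) := by
    simp [P, coeff_monomial, hk]
  have hdeg : P.natDegree ≤ d := natDegree_sum_le_of_forall_le _ _ fun k hk ↦
    (natDegree_monomial_le _).trans (Nat.lt_succ_iff.1 (Finset.mem_range.1 hk))
  have hlead : P.coeff d = 1 := by rw [hcoeff le_rfl, Nat.sub_self, h0]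
  have hmonic : P.Monic := monic_of_natDegree_le_of_coeff_eq_one d hdeg hlead
  have hdeg' : P.natDegree = d := natDegree_eq_of_le_of_coeff_ne_zero hdeg (by simp [hlead])
  have hcard : Multiset.card P.roots = d := by
    rw [← (IsAlgClosed.splits P).natDegree_eq_card_roots, hdeg']
  refine ⟨P.roots, hcard, fun n ↦ ?_⟩
  obtain hn | hn := le_or_gt n d
  · have := Multiset.prod_X_sub_C_coeff P.roots (k := d - n) (by lia)
    rwa [← (IsAlgClosed.splits P).eq_prod_roots_of_monic hmonic, hcoeff (Nat.sub_le _ _), hcard,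
      Nat.sub_sub_self hn] at this
  · rw [hc n hn, Multiset.esymm, Multiset.powersetCard_eq_empty n (hcard ▸ hn)]
    simp

lemma exists_multiset_powerSum_of_newton {K : Type*} [Field K] [IsAlgClosed K] {d : ℕ}
    {c S : ℕ → K} (h0 : c 0 = 1) (hc : ∀ n, d < n → c n = 0)
    (hrec : ∀ n : ℕ, ((n + 1 : ℕ) : K) * c (n + 1) =
      ∑ x ∈ antidiagonal n, c x.1 * S x.2) :
    ∃ s : Multiset K, Multiset.card s = d ∧ ∀ n, S n = -(s.map (· ^ (n + 1))).sum := by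
  obtain ⟨s, hs, hcs⟩ := exists_multiset_esymm_eq h0 hc
  refine ⟨s, hs, fun n ↦ ?_⟩
  induction n using Nat.strong_induction_on with
  | _ n ih =>
    have hsum : ∑ x ∈ antidiagonal n,
        c x.1 * (S x.2 - -(s.map (· ^ (x.2 + 1))).sum) = 0 := by
      simp_rw [mul_sub, Finset.sum_sub_distrib, ← hrec, hcs,
        succ_mul_neg_one_pow_mul_esymm_eq_sum, sub_self]
    rw [Finset.sum_eq_single_of_mem (0, n) (by simp), h0, one_mul] at hsum
    · exact sub_eq_zero.1 hsum
    · intro x hx hne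
      rw [mem_antidiagonal] at hx
      rw [ih x.2 (by grind), sub_self, mul_zero]

/-! ### Stepanov's method -/

lemma linearIndependent_X_pow_mul {K ι : Type*} [Field K] {w : ι → ℕ} (hw : w.Injective)
    {g : ι → K[X]} (hg : ∀ i, (g i).coeff 0 ≠ 0) :
    LinearIndependent K fun i ↦ X ^ w i * g i := by
  classical
  rw [linearIndependent_iff']
  by_contra! h
  obtain ⟨s, c, hsum, i, hi, hci⟩ := h
  obtain ⟨j, hj, hmin⟩ := (s.filter (c · ≠ 0)).exists_min_image w ⟨i, by simp [hi, hci]⟩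
  simp only [Finset.mem_filter] at hj hmin
  have hcoeff := congrArg (coeff · (w j)) hsum
  simp only [finsetSum_coeff, coeff_smul, smul_eq_mul, coeff_X_pow_mul', coeff_zero] at hcoeff
  rw [Finset.sum_eq_single_of_mem j hj.1] at hcoeff
  · simp [hj.2, hg j] at hcoeff
  · intro k hk hkj
    by_cases hck : c k = 0
    · simp [hck]
    · have : w j < w k := lt_of_le_of_ne (hmin k ⟨hk, hck⟩) fun h ↦ hkj (hw h).symm
      simp [this.not_ge]

lemma mixedRadix_injective {B d E Q : ℕ} (hQ : d * E ≤ Q) :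
    Function.Injective fun t : Fin B × Fin d × Fin E ↦ (t.2.2 + E * t.2.1 + Q * t.1 : ℕ) := by
  have digits {n a a' b b' : ℕ} (ha : a < n) (ha' : a' < n) (h : a + n * b = a' + n * b') :
      a = a' ∧ b = b' := by
    have hmod := congrArg (· % n) h
    have hdiv := congrArg (· / n) h
    simp only [Nat.add_mul_mod_self_left, Nat.mod_eq_of_lt, ha, ha',
      Nat.add_mul_div_left _ _ (Nat.zero_lt_of_lt ha), Nat.div_eq_of_lt, zero_add] at hmod hdiv
    exact ⟨hmod, hdiv⟩
  have hlt (j : Fin d) (s : Fin E) : (s + E * j : ℕ) < Q :=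
    calc (s + E * j : ℕ) < E * (j + 1) := by rw [mul_add_one, add_comm]; gcongr; exact s.isLt
      _ ≤ E * d := Nat.mul_le_mul_left _ j.isLt
      _ ≤ Q := mul_comm d E ▸ hQ
  rintro ⟨i, j, s⟩ ⟨i', j', s'⟩ h
  obtain ⟨hjs, hi⟩ := digits (hlt j s) (hlt j' s') h
  obtain ⟨hs, hj⟩ := digits s.isLt s'.isLt hjs
  simp only [Prod.mk.injEq, Fin.ext_iff]
  exact ⟨hi, hj, hs⟩

section Stepanov

variable {K : Type*} [Field K] {B d E Q D : ℕ}

/-- Stepanov's auxiliary polynomial `∑ b(i,j,s)^Q X^(s + Q i) f^(E j)`. If the coefficients `b`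
satisfy the relation `stepanovRelation f u Q b = 0`, it vanishes at each `x` with `x ^ Q ^ 2 = x`,
`f x ≠ 0` and `f x ^ (E * (Q + 1)) = u`. -/
noncomputable def stepanovPoly (f : K[X]) (Q : ℕ) (b : Fin B × Fin d × Fin E → K) : K[X] :=
  ∑ t, C (b t ^ Q) * (X ^ (t.2.2 + Q * t.1 : ℕ) * f ^ (E * t.2.1 : ℕ))

/-- The polynomial which, at the points `x` of interest, takes the value
`(stepanovPoly f Q b).eval x ^ Q * f x ^ ((d - 1) * E)`. -/
noncomputable def stepanovRelation (f : K[X]) (u : K) (Q : ℕ) (b : Fin B × Fin d × Fin E → K) :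
    K[X] :=
  ∑ t, b t • (C (u ^ (t.2.1 : ℕ)) * X ^ (Q * t.2.2 + t.1 : ℕ) * f ^ ((d - 1 - t.2.1) * E))

lemma exists_stepanovRelation_eq_zero (hE : d * E + 1 = Q) (hd : 2 ≤ d) (hQ : 2 * D + 3 < Q)
    {f : K[X]} (hfD : f.natDegree ≤ D) (u : K) :
    ∃ b : Fin (E + D + 2) × Fin d × Fin E → K, b ≠ 0 ∧ stepanovRelation f u Q b = 0 := by
  set M := Q * E + D * (d * E) + (E + D + 2) with hM
  have hmem (t : Fin (E + D + 2) × Fin d × Fin E) :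
      C (u ^ (t.2.1 : ℕ)) * X ^ (Q * t.2.2 + t.1 : ℕ) * f ^ ((d - 1 - t.2.1) * E)
        ∈ degreeLT K M := by
    have hX : (C (u ^ (t.2.1 : ℕ)) * X ^ (Q * t.2.2 + t.1 : ℕ)).natDegree < Q * E + (E + D + 2) :=
      (natDegree_C_mul_X_pow_le _ _).trans_lt <|
        add_lt_add_of_le_of_lt (Nat.mul_le_mul_left _ t.2.2.isLt.le) t.1.isLt
    have hf : (f ^ ((d - 1 - t.2.1) * E)).natDegree ≤ d * E * D :=
      natDegree_pow_le.trans (Nat.mul_le_mul (Nat.mul_le_mul_right _ (by lia)) hfD)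
    rw [mem_degreeLT]
    refine degree_le_natDegree.trans_lt (Nat.cast_lt.2 (natDegree_mul_le.trans_lt ?_))
    rw [mul_comm (d * E)] at hf
    lia
  have hdep : ¬ LinearIndependent K fun t ↦ (⟨_, hmem t⟩ : degreeLT K M) := by
    intro h
    have hcard := h.fintype_card_le_finrank
    rw [(degreeLTEquiv K M).finrank_eq] at hcard
    simp only [Fintype.card_prod, Fintype.card_fin, Module.finrank_fintype_fun_eq_card] at hcard
    have : 2 * E ≤ d * E := Nat.mul_le_mul_right _ hd
    obtain ⟨R, rfl⟩ : ∃ R, Q = R + 1 := ⟨d * E, hE.symm⟩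
    obtain rfl : d * E = R := by lia
    nlinarith
  rw [Fintype.not_linearIndependent_iff] at hdep
  obtain ⟨b, hb, t, ht⟩ := hdep
  exact ⟨b, fun h ↦ ht (congrFun h t), by simpa [stepanovRelation] using congrArg Subtype.val hb⟩

lemma stepanovPoly_ne_zero (hE : d * E + 1 = Q) {f g : K[X]} (hf : f = X * g)
    (hg : g.coeff 0 ≠ 0) {b : Fin B × Fin d × Fin E → K} (hb : b ≠ 0) :
    stepanovPoly f Q b ≠ 0 := by
  intro h
  have hli := linearIndependent_X_pow_mul (mixedRadix_injective (B := B) (d := d) (E := E)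
    (Q := Q) (by lia)) (g := fun t ↦ g ^ (E * t.2.1 : ℕ))
    fun t ↦ by
      rw [coeff_zero_eq_eval_zero, eval_pow, ← coeff_zero_eq_eval_zero]
      exact pow_ne_zero _ hg
  rw [Fintype.linearIndependent_iff] at hli
  refine hb (funext fun t ↦ eq_zero_of_pow_eq_zero (hli (fun t ↦ b t ^ Q) ?_ t))
  rw [← h, stepanovPoly]
  refine Finset.sum_congr rfl fun t _ ↦ ?_
  rw [smul_eq_C_mul, hf]
  ring

lemma natDegree_stepanovPoly_le (hE : d * E + 1 = Q) {f : K[X]}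
    (hfD : f.natDegree ≤ D) (b : Fin (E + D + 2) × Fin d × Fin E → K) :
    (stepanovPoly f Q b).natDegree ≤ Q * (E + 2 * D + 2) := by
  refine natDegree_sum_le_of_forall_le _ _ fun t _ ↦ (natDegree_C_mul_le _ _).trans ?_
  have hf : (f ^ (E * t.2.1 : ℕ)).natDegree ≤ (E * d) * D :=
    natDegree_pow_le.trans (Nat.mul_le_mul (Nat.mul_le_mul_left _ t.2.1.isLt.le) hfD)
  have hX : (X ^ (t.2.2 + Q * t.1 : ℕ) : K[X]).natDegree ≤ E + Q * (E + D + 1) := by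
    rw [natDegree_X_pow]
    exact add_le_add t.2.2.isLt.le (Nat.mul_le_mul_left _ (Nat.lt_succ_iff.1 t.1.isLt))
  have hEd : E ≤ d * E := Nat.le_mul_of_pos_left _ t.2.1.pos
  refine natDegree_mul_le.trans ((add_le_add hX hf).trans ?_)
  rw [mul_comm E d]
  nlinarith

lemma eval_stepanovPoly_pow_mul {p h : ℕ} [Fact p.Prime] [CharP K p] (hQ : Q = p ^ h)
    {f : K[X]} {x u : K} (hK : ∀ y : K, y ^ Q ^ 2 = y) (hu : f.eval x ^ (E * (Q + 1)) = u)
    (b : Fin B × Fin d × Fin E → K) :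
    (stepanovPoly f Q b).eval x ^ Q * f.eval x ^ ((d - 1) * E) =
      (stepanovRelation f u Q b).eval x := by
  have hK' (y : K) : y ^ (Q * Q) = y := by rw [← sq, hK]
  simp only [stepanovPoly, stepanovRelation, eval_finsetSum, eval_smul, smul_eq_mul, eval_mul,
    eval_C, eval_pow, eval_X]
  rw [hQ, sum_pow_char_pow, ← hQ, Finset.sum_mul]
  refine Finset.sum_congr rfl fun t _ ↦ ?_
  obtain ⟨m, hm⟩ : ∃ m, d - 1 = t.2.1 + m := ⟨d - 1 - t.2.1, by lia⟩
  have hx : (x ^ (t.2.2 + Q * t.1 : ℕ)) ^ Q = x ^ (Q * t.2.2 + t.1 : ℕ) := by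
    rw [← pow_mul, add_mul, pow_add, mul_right_comm, pow_mul x (Q * Q), hK', ← pow_add,
      mul_comm Q]
  rw [mul_pow, mul_pow, ← pow_mul (b t), hK', hx, ← hu, hm, Nat.add_sub_cancel_left]
  ring

variable [Fintype K] [DecidableEq K] {p h : ℕ} [Fact p.Prime] [CharP K p]

lemma card_eval_pow_eq_le_of_eq_X_mul (hQp : Q = p ^ h) (hK : Fintype.card K = Q ^ 2)
    (hE : d * E + 1 = Q) (hd : 2 ≤ d) (hQ : 2 * D + 3 < Q) {f g : K[X]} (hf : f = X * g)
    (hg : g.coeff 0 ≠ 0) (hfD : f.natDegree ≤ D) (u : K) :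
    (Finset.univ.filter fun x : K ↦ f.eval x ≠ 0 ∧ f.eval x ^ (E * (Q + 1)) = u).card
      ≤ Q * (E + 2 * D + 2) := by
  obtain ⟨b, hb, hrel⟩ := exists_stepanovRelation_eq_zero hE hd hQ hfD u
  have hne := stepanovPoly_ne_zero hE hf hg hb
  refine le_trans ?_ (natDegree_stepanovPoly_le hE hfD b)
  refine card_le_degree_of_subset_roots fun x hx ↦ ?_
  obtain ⟨hfx, hu⟩ := (Finset.mem_filter.1 hx).2
  have hpow := eval_stepanovPoly_pow_mul hQp (hK ▸ FiniteField.pow_card) hu b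
  rw [hrel, eval_zero] at hpow
  exact (mem_roots hne).2 <| eq_zero_of_pow_eq_zero <|
    (mul_eq_zero.1 hpow).resolve_right (pow_ne_zero _ hfx)

lemma card_eval_pow_eq_le (hQp : Q = p ^ h) (hK : Fintype.card K = Q ^ 2)
    (hE : d * E + 1 = Q) (hd : 2 ≤ d) {f : K[X]} (hQ : 2 * f.natDegree + 3 < Q) {α : K}
    (hα : f.IsRoot α) (hα' : ¬ f.derivative.IsRoot α) (u : K) :
    (Finset.univ.filter fun x : K ↦ f.eval x ≠ 0 ∧ f.eval x ^ (E * (Q + 1)) = u).card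
      ≤ Q * (E + 2 * f.natDegree + 2) := by
  obtain ⟨g, hg⟩ : X ∣ f.comp (X + C α) := by
    rw [X_dvd_iff, coeff_zero_eq_eval_zero]
    simpa using hα
  have hg0 : g.coeff 0 ≠ 0 := by
    have := congrArg (fun P ↦ P.derivative.eval 0) hg
    simp only [derivative_comp, derivative_mul] at this
    rw [coeff_zero_eq_eval_zero]
    simp_all
  have := card_eval_pow_eq_le_of_eq_X_mul hQp hK hE hd hQ hg hg0 (by simp [natDegree_comp]) u
  refine (Finset.card_equiv (Equiv.subRight α) fun x ↦ ?_).trans_le this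
  simp

end Stepanov

/-! ### Character sums over an extension of even degree -/

lemma norm_mulChar_coe_units {R : Type*} [CommRing R] [Finite R] (χ : MulChar R ℂ) (u : Rˣ) :
    ‖χ u‖ = 1 :=
  ((χ.toMonoidHom.comp (Units.coeHom R)).isOfFinOrder (isOfFinOrder_of_finite u)).norm_eq_one

lemma norm_mulChar_le_one {R : Type*} [CommRing R] [Finite R] (χ : MulChar R ℂ) (a : R) :
    ‖χ a‖ ≤ 1 := by
  by_cases ha : IsUnit a
  · exact (norm_mulChar_coe_units χ ha.unit).le
  · simp [χ.map_nonunit ha]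

lemma two_lt_card_of_mulChar_ne_one {F R : Type*} [Field F] [Fintype F] [CommMonoidWithZero R]
    {χ : MulChar F R} (hχ : χ ≠ 1) : 2 < Fintype.card F := by
  obtain ⟨a, ha⟩ := MulChar.ne_one_iff.1 hχ
  refine Fintype.two_lt_card_iff.2 ⟨0, 1, a, zero_ne_one, a.ne_zero.symm, fun h ↦ ha ?_⟩
  rw [← h, map_one]

lemma norm_sum_mulChar_le_of_card_fiber_le {F X : Type*} [Field F] [Fintype F] [DecidableEq F]
    [Fintype X] {χ : MulChar F ℂ} (hχ : χ ≠ 1) (g : X → F) {D T : ℕ}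
    (hD : (Finset.univ.filter fun x ↦ g x = 0).card ≤ D)
    (hT : ∀ u ≠ 0, (Finset.univ.filter fun x ↦ g x = u).card ≤ T) :
    ‖∑ x, χ (g x)‖ ≤ (Fintype.card F - 1) * T + D - Fintype.card X := by
  set N : F → ℕ := fun u ↦ (Finset.univ.filter fun x ↦ g x = u).card
  have hfiber : ∑ x, χ (g x) = ∑ u, χ u * N u := by
    rw [← Finset.sum_fiberwise (g := g)]
    refine Finset.sum_congr rfl fun u _ ↦ ?_
    rw [Finset.sum_congr rfl fun x hx ↦ congrArg χ (Finset.mem_filter.1 hx).2, Finset.sum_const,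
      nsmul_eq_mul, mul_comm]
  -- Subtracting the constant `T` from every fibre size does not change the sum.
  have hshift : ∑ x, χ (g x) = ∑ u ∈ Finset.univ.erase 0, -(χ u * ((T - N u : ℝ) : ℂ)) := by
    rw [Finset.sum_erase _ (by simp [MulChar.map_zero]), hfiber, ← sub_zero (∑ u, χ u * _),
      ← zero_mul (T : ℂ), ← MulChar.sum_eq_zero_of_ne_one hχ, Finset.sum_mul,
      ← Finset.sum_sub_distrib]
    refine Finset.sum_congr rfl fun u _ ↦ ?_
    push_cast
    ring
  have htotal : (Fintype.card X : ℝ) ≤ D + ∑ u ∈ Finset.univ.erase 0, (N u : ℝ) := by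
    rw [← Finset.card_univ, Finset.card_eq_sum_card_fiberwise (f := g) (t := Finset.univ) (by simp),
      ← Finset.add_sum_erase _ _ (Finset.mem_univ 0)]
    push_cast
    gcongr
  calc ‖∑ x, χ (g x)‖ ≤ ∑ u ∈ Finset.univ.erase (0 : F), (T - N u : ℝ) := by
        rw [hshift]
        refine norm_sum_le_of_le _ fun u hu ↦ ?_
        have hTN : (0 : ℝ) ≤ T - N u :=
          sub_nonneg.2 (Nat.cast_le.2 (hT u (Finset.ne_of_mem_erase hu)))
        rw [norm_neg, norm_mul, Complex.norm_real, Real.norm_of_nonneg hTN]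
        exact mul_le_of_le_one_left hTN (norm_mulChar_le_one χ u)
    _ = (Fintype.card F - 1) * T - ∑ u ∈ Finset.univ.erase (0 : F), (N u : ℝ) := by
        rw [Finset.sum_sub_distrib, Finset.sum_const, Finset.card_erase_of_mem (Finset.mem_univ _),
          Finset.card_univ, nsmul_eq_mul, Nat.cast_pred Fintype.card_pos]
    _ ≤ _ := by linarith

lemma card_norm_aeval_eq_zero_le {F K : Type*} [Field F] [DecidableEq F] [Field K] [Fintype K]
    [Algebra F K] {f : F[X]} (hf : f ≠ 0) :
    (Finset.univ.filter fun x : K ↦ Algebra.norm F (aeval x f) = 0).card ≤ f.natDegree := by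
  classical
  rw [← natDegree_map (algebraMap F K)]
  refine card_le_degree_of_subset_roots fun x hx ↦ ?_
  simpa [Algebra.norm_eq_zero_iff, hf] using hx

section EvenExtension

variable {F K : Type*} [Field F] [Fintype F] [Field K] [Algebra F K] {h E : ℕ}

lemma algebraMap_norm_eq_pow_of_finrank_eq_two_mul [Finite K] (hK : Module.finrank F K = 2 * h)
    (hE : (Fintype.card F - 1) * E + 1 = Fintype.card F ^ h) (y : K) :
    algebraMap F K (Algebra.norm F y) = y ^ (E * (Fintype.card F ^ h + 1)) := by
  have hq : 0 < Fintype.card F - 1 := Nat.sub_pos_of_lt Fintype.one_lt_card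
  rw [FiniteField.algebraMap_norm_eq_pow, Module.natCard_eq_pow_finrank (K := F) (V := K),
    Nat.card_eq_fintype_card, hK, mul_comm 2, pow_mul]
  congr 1
  refine Nat.div_eq_of_eq_mul_right hq ?_
  rw [← mul_assoc, ← hE]
  generalize (Fintype.card F - 1) * E = R
  exact Nat.sub_eq_of_eq_add (by ring)

variable [Fintype K] {f : F[X]} {α : K}

lemma card_norm_aeval_eq_le [DecidableEq F] (hK : Module.finrank F K = 2 * h)
    (hE : (Fintype.card F - 1) * E + 1 = Fintype.card F ^ h) (hF : 2 < Fintype.card F)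
    (hh : 2 * f.natDegree + 3 < Fintype.card F ^ h) (hα : aeval α f = 0)
    (hα' : aeval α f.derivative ≠ 0) {u : F} (hu : u ≠ 0) :
    (Finset.univ.filter fun x : K ↦ Algebra.norm F (aeval x f) = u).card ≤
      Fintype.card F ^ h * (E + 2 * f.natDegree + 2) := by
  classical
  obtain ⟨p, hp⟩ := CharP.exists F
  obtain ⟨n, hpprime, hn⟩ := FiniteField.card F p
  have : Fact p.Prime := ⟨hpprime⟩
  have : CharP K p := charP_of_injective_algebraMap (algebraMap F K).injective p
  have hcard : Fintype.card K = (Fintype.card F ^ h) ^ 2 := by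
    rw [Module.card_eq_pow_finrank (K := F), hK, ← pow_mul, mul_comm]
  have := card_eval_pow_eq_le (f := f.map (algebraMap F K)) (α := α) (by rw [hn, ← pow_mul]) hcard
    hE (by lia) (by rwa [natDegree_map]) (by simpa [IsRoot] using hα)
    (by simpa [IsRoot, derivative_map] using hα') (algebraMap F K u)
  rw [natDegree_map] at this
  refine (Finset.card_le_card fun x hx ↦ ?_).trans this
  simp only [Finset.mem_filter, Finset.mem_univ, true_and, eval_map_algebraMap] at hx ⊢
  refine ⟨fun h0 ↦ hu ?_, ?_⟩
  · rw [← hx, h0, Algebra.norm_zero]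
  · rw [← algebraMap_norm_eq_pow_of_finrank_eq_two_mul hK hE, hx]

lemma norm_sum_mulChar_norm_aeval_le {χ : MulChar F ℂ} (hχ : χ ≠ 1)
    (hK : Module.finrank F K = 2 * h) (hh : 2 * f.natDegree + 3 < Fintype.card F ^ h)
    (hα : aeval α f = 0) (hα' : aeval α f.derivative ≠ 0) :
    ‖∑ x : K, χ (Algebra.norm F (aeval x f))‖ ≤
      (Fintype.card F - 1) * (2 * f.natDegree + 2) * Fintype.card F ^ h := by
  classical
  have hf : f ≠ 0 := by
    rintro rfl
    simp at hα'
  obtain ⟨E, hE⟩ : Fintype.card F - 1 ∣ Fintype.card F ^ h - 1 := by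
    simpa using Nat.sub_dvd_pow_sub_pow (Fintype.card F) 1 h
  replace hE : (Fintype.card F - 1) * E + 1 = Fintype.card F ^ h := by lia
  have hbound := norm_sum_mulChar_le_of_card_fiber_le hχ
    (fun x : K ↦ Algebra.norm F (aeval x f)) (card_norm_aeval_eq_zero_le hf)
    fun u hu ↦ card_norm_aeval_eq_le hK hE (two_lt_card_of_mulChar_ne_one hχ) hh hα hα' hu
  rw [Module.card_eq_pow_finrank (K := F) (V := K), hK] at hbound
  have hE' : ((Fintype.card F : ℝ) - 1) * E = Fintype.card F ^ h - 1 := by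
    rw [← Nat.cast_pred Fintype.card_pos, eq_sub_iff_add_eq]
    exact_mod_cast hE
  have hD : (f.natDegree : ℝ) ≤ Fintype.card F ^ h := by
    exact_mod_cast (by lia : f.natDegree ≤ Fintype.card F ^ h)
  push_cast at hbound
  linear_combination hbound + hD + (Fintype.card F : ℝ) ^ h * hE'

end EvenExtension

/-! ### The L-function of a polynomial over a finite field -/

section Resultant

variable {F E : Type*} [Field F] [Field E] [Algebra F E]

lemma algebraMap_resultant_eq_prod_aroots [IsAlgClosed E] {f : F[X]} (hf : f.Monic) (g : F[X]) :
    algebraMap F E (resultant f g) = ((f.aroots E).map (aeval · g)).prod := by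
  have := resultant_eq_prod_eval (f.map (algebraMap F E)) (g.map (algebraMap F E)) g.natDegree
    natDegree_map_le (IsAlgClosed.splits _)
  rw [natDegree_map, resultant_map_map, (hf.map _).leadingCoeff, one_pow, one_mul] at this
  simpa only [eval_map_algebraMap] using this

lemma resultant_eq_of_dvd_sub {f g₁ g₂ : F[X]} (hf : f.Monic) (h : f ∣ g₁ - g₂) :
    resultant f g₁ = resultant f g₂ := by
  apply (algebraMap F (AlgebraicClosure F)).injective
  rw [algebraMap_resultant_eq_prod_aroots hf, algebraMap_resultant_eq_prod_aroots hf]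
  refine congrArg Multiset.prod (Multiset.map_congr rfl fun x hx ↦ sub_eq_zero.1 ?_)
  rw [← map_sub]
  exact aeval_eq_zero_of_dvd_aeval_eq_zero h (mem_aroots.1 hx).2

lemma norm_aeval_powerBasis_gen [Algebra.IsSeparable F E] (pb : PowerBasis F E) (f : F[X]) :
    Algebra.norm F (aeval pb.gen f) = resultant (minpoly F pb.gen) f := by
  classical
  have : FiniteDimensional F E := pb.finite
  apply (algebraMap F (AlgebraicClosure F)).injective
  rw [Algebra.norm_eq_prod_embeddings F (AlgebraicClosure F),
    algebraMap_resultant_eq_prod_aroots (minpoly.monic pb.isIntegral_gen)]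
  have : ∏ σ : E →ₐ[F] AlgebraicClosure F, σ (aeval pb.gen f) =
      ∏ y : {y // y ∈ (minpoly F pb.gen).aroots (AlgebraicClosure F)},
        aeval (y : AlgebraicClosure F) f :=
    Fintype.prod_equiv pb.liftEquiv' _ _ fun σ ↦ by
      rw [PowerBasis.liftEquiv'_apply_coe, ← aeval_algHom_apply]
  rw [this, Finset.prod_mem_multiset _ _ (aeval · f) fun _ ↦ rfl,
    Finset.prod_eq_multiset_prod, Multiset.toFinset_val, Multiset.dedup_eq_self.2]
  exact nodup_roots (Separable.map (Algebra.IsSeparable.isSeparable F pb.gen))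

end Resultant

section AdjoinCharpoly

variable {F K : Type*} [Field F] [Field K] [Algebra F K]

variable (F) in
/-- The characteristic polynomial over `F` of multiplication by `x` on `K`, for a finite extension
`K / F`. It is written as a power of the minimal polynomial so that its only prime factor is
visible. -/
noncomputable def adjoinCharpoly (x : K) : F[X] :=
  minpoly F x ^ Module.finrank (IntermediateField.adjoin F {x}) K

variable [FiniteDimensional F K]

lemma monic_adjoinCharpoly (x : K) : (adjoinCharpoly F x).Monic :=
  (minpoly.monic (Algebra.IsIntegral.isIntegral x)).pow _

lemma finrank_adjoin_mul_natDegree_minpoly (x : K) :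
    Module.finrank (IntermediateField.adjoin F {x}) K * (minpoly F x).natDegree =
      Module.finrank F K := by
  rw [mul_comm, ← IntermediateField.adjoin.finrank (Algebra.IsIntegral.isIntegral x)]
  exact Module.finrank_mul_finrank _ _ _

lemma natDegree_adjoinCharpoly (x : K) :
    (adjoinCharpoly F x).natDegree = Module.finrank F K := by
  rw [adjoinCharpoly, natDegree_pow, finrank_adjoin_mul_natDegree_minpoly]

lemma resultant_pow_left {f : F[X]} (hf : f.Monic) (g : F[X]) (n : ℕ) :
    resultant (f ^ n) g = resultant f g ^ n := by
  induction n with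
  | zero => simp
  | succ n ih =>
    rw [pow_succ, (hf.pow n).natDegree_mul hf, resultant_mul_left _ _ _ _ le_rfl, ih, pow_succ]

lemma norm_aeval_eq_resultant_adjoinCharpoly [Algebra.IsSeparable F K] (x : K) (f : F[X]) :
    Algebra.norm F (aeval x f) = resultant (adjoinCharpoly F x) f := by
  have hx : IsIntegral F x := Algebra.IsIntegral.isIntegral x
  have h := norm_aeval_powerBasis_gen (IntermediateField.adjoin.powerBasis hx) f
  rw [IntermediateField.adjoin.powerBasis_gen hx, IntermediateField.minpoly_gen] at h
  rw [adjoinCharpoly, resultant_pow_left (minpoly.monic hx), ← h, ← map_pow,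
    ← Algebra.norm_norm (S := IntermediateField.adjoin F {x}), ← Algebra.norm_algebraMap,
    ← aeval_algebraMap_apply]
  simp

end AdjoinCharpoly

section CountFrobeniusOrbits

variable {F K : Type*} [Field F] [Field K] [Algebra F K]

open scoped Classical in
lemma card_minpoly_eq [Fintype K] {P : F[X]} (hP : Irreducible P) (hm : P.Monic)
    (h : P.natDegree ∣ Module.finrank F K) :
    (Finset.univ.filter fun x : K ↦ minpoly F x = P).card = P.natDegree := by
  have := Fact.mk hP
  have hfinrank : Module.finrank F (AdjoinRoot P) = P.natDegree :=
    finrank_quotient_span_eq_natDegree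
  have hcard := FiniteField.natCard_algHom_of_finrank_dvd (F := F) (K := AdjoinRoot P) (L := K)
    (hfinrank ▸ h)
  rw [hfinrank, Nat.card_congr (AdjoinRoot.equiv K F P hP.ne_zero)] at hcard
  rw [← hcard, ← Fintype.card_subtype, ← Nat.card_eq_fintype_card]
  refine Nat.card_congr (Equiv.subtypeEquivRight fun x ↦ ?_)
  rw [mem_aroots]
  exact ⟨fun hx ↦ ⟨hP.ne_zero, hx ▸ minpoly.aeval F x⟩,
    fun hx ↦ (minpoly.eq_of_irreducible_of_monic hP hx.2 hm).symm⟩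

open UniqueFactorizationMonoid

open scoped Classical in
lemma natDegree_eq_sum_count_mul_natDegree {G : F[X]} (hG : G.Monic) :
    G.natDegree = ∑ P ∈ (normalizedFactors G).toFinset,
      (normalizedFactors G).count P * P.natDegree := by
  have h := leadingCoeff_mul_prod_normalizedFactors G
  rw [hG.leadingCoeff, C_1, one_mul] at h
  conv_lhs => rw [← h]
  rw [natDegree_multiset_prod_of_monic _ fun P hP ↦
    ((Polynomial.mem_normalizedFactors_iff hG.ne_zero).1 hP).2.1, Finset.sum_multiset_map_count]
  rfl

open scoped Classical in
lemma pow_dvd_iff_le_count_normalizedFactors {P G : F[X]} (hG : G ≠ 0) (hP : Irreducible P)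
    (hm : P.Monic) (j : ℕ) : P ^ j ∣ G ↔ j ≤ (normalizedFactors G).count P := by
  rw [pow_dvd_iff_le_emultiplicity, emultiplicity_eq_count_normalizedFactors hP hG,
    hm.normalize_eq_self, Nat.cast_le]

open scoped Classical in
lemma card_minpoly_eq_and_adjoinCharpoly_dvd [Fintype K] {P G : F[X]} (hG : G ≠ 0)
    (hP : Irreducible P) (hm : P.Monic) :
    (Finset.univ.filter fun x : K ↦ adjoinCharpoly F x ∣ G ∧ minpoly F x = P).card =
      ∑ j ∈ Finset.Icc 1 ((normalizedFactors G).count P),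
        if j * P.natDegree = Module.finrank F K then P.natDegree else 0 := by
  have hdvd {x : K} (hx : minpoly F x = P) :
      adjoinCharpoly F x ∣ G ↔
        Module.finrank (IntermediateField.adjoin F {x}) K ≤ (normalizedFactors G).count P := by
    rw [adjoinCharpoly, hx, pow_dvd_iff_le_count_normalizedFactors hG hP hm]
  have hdeg {x : K} (hx : minpoly F x = P) :
      Module.finrank (IntermediateField.adjoin F {x}) K * P.natDegree = Module.finrank F K :=
    hx ▸ finrank_adjoin_mul_natDegree_minpoly x
  have hinj {i j : ℕ} (h : i * P.natDegree = j * P.natDegree) : i = j :=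
    Nat.eq_of_mul_eq_mul_right hP.natDegree_pos h
  by_cases h : ∃ j ∈ Finset.Icc 1 ((normalizedFactors G).count P),
      j * P.natDegree = Module.finrank F K
  · obtain ⟨j, hj, hjK⟩ := h
    rw [Finset.sum_eq_single_of_mem j hj fun i _ hij ↦ if_neg fun hi ↦
      hij (hinj (hi.trans hjK.symm)), if_pos hjK, ← card_minpoly_eq (K := K) hP hm ⟨j, by lia⟩]
    refine congrArg Finset.card (Finset.filter_congr fun x _ ↦
      and_iff_right_of_imp fun hx ↦ (hdvd hx).2 ?_)
    rw [hinj ((hdeg hx).trans hjK.symm)]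
    exact (Finset.mem_Icc.1 hj).2
  · push Not at h
    rw [Finset.sum_eq_zero fun j hj ↦ if_neg (h j hj), Finset.card_eq_zero,
      Finset.filter_eq_empty_iff]
    rintro x - ⟨hxG, hx⟩
    exact h _ (Finset.mem_Icc.2 ⟨Module.finrank_pos, (hdvd hx).1 hxG⟩) (hdeg hx)

open scoped Classical in
lemma card_adjoinCharpoly_dvd [Fintype K] {G : F[X]} (hG : G ≠ 0) :
    (Finset.univ.filter fun x : K ↦ adjoinCharpoly F x ∣ G).card =
      ∑ P ∈ (normalizedFactors G).toFinset, ∑ j ∈ Finset.Icc 1 ((normalizedFactors G).count P),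
        if j * P.natDegree = Module.finrank F K then P.natDegree else 0 := by
  rw [Finset.card_eq_sum_card_fiberwise (f := minpoly F) (t := (normalizedFactors G).toFinset)]
  · refine Finset.sum_congr rfl fun P hP ↦ ?_
    obtain ⟨hirr, hm, -⟩ := (Polynomial.mem_normalizedFactors_iff hG).1 (Multiset.mem_toFinset.1 hP)
    rw [Finset.filter_filter, card_minpoly_eq_and_adjoinCharpoly_dvd hG hirr hm]
  · intro x hx
    have hxG : adjoinCharpoly F x ∣ G := (Finset.mem_filter.1 hx).2
    have hx' : IsIntegral F x := Algebra.IsIntegral.isIntegral x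
    rw [Finset.mem_coe, Multiset.mem_toFinset, Polynomial.mem_normalizedFactors_iff hG]
    exact ⟨minpoly.irreducible hx', minpoly.monic hx',
      (dvd_pow_self _ Module.finrank_pos.ne').trans hxG⟩

open scoped Classical in
lemma sum_card_adjoinCharpoly_dvd {K : ℕ → Type*} [∀ k, Field (K k)] [∀ k, Fintype (K k)]
    [∀ k, Algebra F (K k)] (hK : ∀ k, Module.finrank F (K k) = k + 1) {G : F[X]} (hG : G.Monic) :
    ∑ k ∈ Finset.range G.natDegree,
      (Finset.univ.filter fun x : K k ↦ adjoinCharpoly F x ∣ G).card = G.natDegree := by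
  simp_rw [card_adjoinCharpoly_dvd hG.ne_zero, hK]
  conv_rhs => rw [natDegree_eq_sum_count_mul_natDegree hG]
  rw [Finset.sum_comm]
  refine Finset.sum_congr rfl fun P hP ↦ ?_
  have hle : (normalizedFactors G).count P * P.natDegree ≤ G.natDegree := by
    rw [natDegree_eq_sum_count_mul_natDegree hG]
    exact Finset.single_le_sum (f := fun P ↦ (normalizedFactors G).count P * P.natDegree)
      (fun _ _ ↦ Nat.zero_le _) hP
  have hpos : 0 < P.natDegree :=
    (irreducible_of_normalized_factor _ (Multiset.mem_toFinset.1 hP)).natDegree_pos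
  rw [Finset.sum_comm, Finset.sum_congr rfl fun j hj ↦ ?_, Finset.sum_const, Nat.card_Icc,
    Nat.add_sub_cancel, smul_eq_mul]
  have hj' := Finset.mem_Icc.1 hj
  have hjP : 1 ≤ j * P.natDegree := Nat.mul_pos hj'.1 hpos
  have hjle : j * P.natDegree ≤ G.natDegree := (Nat.mul_le_mul_right _ hj'.2).trans hle
  rw [Finset.sum_eq_single_of_mem (j * P.natDegree - 1) (Finset.mem_range.2 (by lia))
    fun k _ hk ↦ if_neg (by lia), if_pos (by lia)]

end CountFrobeniusOrbits

section MonicSums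

variable {F : Type*} [Field F] [Finite F]

noncomputable instance fintypeMonicDegreeEq (n : ℕ) : Fintype (MonicDegreeEq F n) := by
  have : Finite (degreeLT F n) := .of_equiv _ (degreeLTEquiv F n).symm.toEquiv
  refine @Fintype.ofFinite _ (.of_injective
    (fun G ↦ (⟨G.1 - X ^ n, mem_degreeLT.2 ?_⟩ : degreeLT F n)) fun G H h ↦ ?_)
  · refine (degree_sub_lt_left ?_ G.monic.ne_zero ?_).trans_eq G.degree
    · rw [G.degree, degree_X_pow]
    · rw [G.monic.leadingCoeff, leadingCoeff_X_pow]
  · exact Subtype.ext (sub_left_injective (congrArg Subtype.val h))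

open scoped Classical in
lemma sum_monicDegreeEq_of_dvd {H : F[X]} (hH : H.Monic) {m n : ℕ} (hn : H.natDegree + m = n)
    (φ : F[X] → ℂ) :
    (∑ G : MonicDegreeEq F n, if H ∣ G.1 then φ G.1 else 0) =
      ∑ G : MonicDegreeEq F m, φ (H * G.1) := by
  rw [← Finset.sum_filter]
  symm
  refine Finset.sum_bij (fun G _ ↦ .mk (H * G.1) (hH.mul G.monic) ?_) ?_ ?_ ?_ fun _ _ ↦ rfl
  · rw [hH.natDegree_mul G.monic, G.natDegree, hn]
  · exact fun G _ ↦ Finset.mem_filter.2 ⟨Finset.mem_univ _, dvd_mul_right _ _⟩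
  · exact fun G _ G' _ h ↦ Subtype.ext (mul_left_cancel₀ hH.ne_zero (congrArg Subtype.val h))
  · intro G hG
    obtain ⟨G', hG'⟩ := (Finset.mem_filter.1 hG).2
    have hm : G'.Monic := hH.of_mul_monic_left (hG' ▸ G.monic)
    have hdeg : G'.natDegree = m := by
      have := G.natDegree
      rw [hG', hH.natDegree_mul hm] at this
      lia
    exact ⟨.mk G' hm hdeg, Finset.mem_univ _, Subtype.ext hG'.symm⟩

lemma succ_mul_sum_monicDegreeEq {K : ℕ → Type*} [∀ k, Field (K k)] [∀ k, Fintype (K k)]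
    [∀ k, Algebra F (K k)] (hK : ∀ k, Module.finrank F (K k) = k + 1) {φ : F[X] → ℂ}
    (hφ : ∀ G H : F[X], G.Monic → H.Monic → φ (G * H) = φ G * φ H) (n : ℕ) :
    ((n + 1 : ℕ) : ℂ) * ∑ G : MonicDegreeEq F (n + 1), φ G.1 =
      ∑ x ∈ antidiagonal n, (∑ G : MonicDegreeEq F x.1, φ G.1) *
        ∑ y : K x.2, φ (adjoinCharpoly F y) := by
  classical
  calc ((n + 1 : ℕ) : ℂ) * ∑ G : MonicDegreeEq F (n + 1), φ G.1
      = ∑ G : MonicDegreeEq F (n + 1), ∑ k ∈ Finset.range (n + 1), ∑ y : K k,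
          if adjoinCharpoly F y ∣ G.1 then φ G.1 else 0 := by
        rw [Finset.mul_sum]
        refine Finset.sum_congr rfl fun G _ ↦ ?_
        have hcount := sum_card_adjoinCharpoly_dvd hK G.monic
        rw [G.natDegree] at hcount
        simp_rw [← Finset.sum_filter, Finset.sum_const, nsmul_eq_mul, ← Finset.sum_mul,
          ← Nat.cast_sum, hcount]
    _ = ∑ x ∈ antidiagonal n, ∑ y : K x.2, ∑ G : MonicDegreeEq F (n + 1),
          if adjoinCharpoly F y ∣ G.1 then φ G.1 else 0 := by
        rw [Finset.sum_comm, ← Finset.Nat.sum_antidiagonal_eq_sum_range_succ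
          (fun k _ ↦ ∑ G : MonicDegreeEq F (n + 1), ∑ y : K k,
            if adjoinCharpoly F y ∣ G.1 then φ G.1 else 0),
          ← Finset.Nat.sum_antidiagonal_swap]
        exact Finset.sum_congr rfl fun x _ ↦ Finset.sum_comm
    _ = _ := by
        refine Finset.sum_congr rfl fun x hx ↦ ?_
        rw [Finset.mul_sum]
        refine Finset.sum_congr rfl fun y _ ↦ ?_
        have hy : (adjoinCharpoly F y).natDegree + x.1 = n + 1 := by
          rw [natDegree_adjoinCharpoly, hK, ← mem_antidiagonal.1 hx]
          ring
        rw [sum_monicDegreeEq_of_dvd (monic_adjoinCharpoly y) hy, Finset.sum_mul]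
        refine Finset.sum_congr rfl fun G _ ↦ ?_
        rw [hφ _ _ (monic_adjoinCharpoly y) G.monic, mul_comm]

end MonicSums

section Twist

variable {F : Type*} [Field F]

lemma resultant_mul_right_of_monic {f : F[X]} (hf : f.Monic) (g₁ g₂ : F[X]) :
    resultant f (g₁ * g₂) = resultant f g₁ * resultant f g₂ := by
  apply (algebraMap F (AlgebraicClosure F)).injective
  simp_rw [map_mul, algebraMap_resultant_eq_prod_aroots hf, map_mul, Multiset.prod_map_mul]

lemma resultant_mul_left_of_monic {f₁ f₂ : F[X]} (hf₁ : f₁.Monic) (hf₂ : f₂.Monic) (g : F[X]) :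
    resultant (f₁ * f₂) g = resultant f₁ g * resultant f₂ g := by
  rw [hf₁.natDegree_mul hf₂, resultant_mul_left _ _ _ _ le_rfl]

lemma degree_mul_modByMonic_lt {f : F[X]} (hf : f.Monic) {n : ℕ} (hn : f.natDegree ≤ n)
    (u : F[X]) (G : MonicDegreeEq F n) : (((u - 1) * G.1) %ₘ f).degree < G.1.degree := by
  refine (degree_modByMonic_lt _ hf).trans_le ?_
  rw [G.degree, degree_eq_natDegree hf.ne_zero]
  exact_mod_cast hn

/-- The monic polynomial of degree `n ≥ deg f` that is obtained from `G` by multiplying its residue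
class modulo `f` by `u` and keeping its quotient by `f`. -/
noncomputable def twistResidue {f : F[X]} (hf : f.Monic) {n : ℕ} (hn : f.natDegree ≤ n) (u : F[X])
    (G : MonicDegreeEq F n) : MonicDegreeEq F n :=
  .mk (G.1 + ((u - 1) * G.1) %ₘ f) (G.monic.add_of_left (degree_mul_modByMonic_lt hf hn u G))
    (by rw [natDegree_add_eq_left_of_degree_lt (degree_mul_modByMonic_lt hf hn u G), G.natDegree])

lemma dvd_twistResidue_sub {f : F[X]} (hf : f.Monic) {n : ℕ} (hn : f.natDegree ≤ n) (u : F[X])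
    (G : MonicDegreeEq F n) : f ∣ (twistResidue hf hn u G).1 - u * G.1 := by
  refine ⟨-(((u - 1) * G.1) /ₘ f), ?_⟩
  rw [twistResidue, MonicDegreeEq.mk_coe]
  linear_combination modByMonic_add_div ((u - 1) * G.1) f

lemma twistResidue_injective {f : F[X]} (hf : f.Monic) {n : ℕ} (hn : f.natDegree ≤ n) {u : F[X]}
    (hu : IsCoprime f u) : Function.Injective (twistResidue hf hn u) := by
  intro G H hGH
  have hmul : f ∣ u * (G.1 - H.1) := by
    have := dvd_sub (dvd_twistResidue_sub hf hn u H) (dvd_twistResidue_sub hf hn u G)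
    rw [hGH] at this
    convert this using 1
    ring
  have hmod : ((u - 1) * G.1) %ₘ f = ((u - 1) * H.1) %ₘ f := by
    rw [← sub_eq_zero, ← sub_modByMonic, modByMonic_eq_zero_iff_dvd hf, ← mul_sub]
    exact (hu.dvd_of_dvd_mul_left hmul).mul_left _
  have := congrArg Subtype.val hGH
  rw [twistResidue, twistResidue, MonicDegreeEq.mk_coe, MonicDegreeEq.mk_coe, hmod] at this
  exact Subtype.ext (add_right_cancel this)

variable [Finite F]

lemma exists_resultant_eq_of_irreducible {g : F[X]} (hg : Irreducible g) (hm : g.Monic) (a : F) :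
    ∃ u, resultant g u = a := by
  have := Fact.mk hg
  have : Module.Finite F (AdjoinRoot g) := hm.finite_adjoinRoot
  have : Finite (AdjoinRoot g) := Module.finite_of_finite F
  obtain ⟨θ, hθ⟩ := FiniteField.norm_surjective F (AdjoinRoot g) a
  obtain ⟨u, rfl⟩ := AdjoinRoot.mk_surjective θ
  have hnorm := norm_aeval_powerBasis_gen (AdjoinRoot.powerBasis hm.ne_zero) u
  rw [AdjoinRoot.minpoly_powerBasis_gen_of_monic hm, AdjoinRoot.powerBasis_gen,
    AdjoinRoot.aeval_eq, hθ] at hnorm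
  exact ⟨u, hnorm.symm⟩

lemma exists_resultant_eq {f : F[X]} (hf : f.Monic) (hsep : f.Separable) (hdeg : f.natDegree ≠ 0)
    (a : F) : ∃ u, resultant f u = a := by
  obtain ⟨g, hgm, hg, h, rfl⟩ := exists_monic_irreducible_factor f
    (not_isUnit_of_natDegree_pos f hdeg.bot_lt)
  have hhm : h.Monic := hgm.of_mul_monic_left hf
  obtain ⟨t, ht⟩ := exists_resultant_eq_of_irreducible hg hgm a
  obtain ⟨r, s, hrs⟩ := hsep.isCoprime
  have hg' : resultant g (t * (s * h) + r * g) = a := by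
    rw [← ht]
    exact resultant_eq_of_dvd_sub hgm ⟨r - t * r, by linear_combination t * hrs⟩
  have hh' : resultant h (t * (s * h) + r * g) = 1 := by
    rw [resultant_eq_of_dvd_sub (g₂ := 1) hhm ⟨t * s - s, by linear_combination hrs⟩,
      resultant_one_right, hhm.coeff_natDegree, one_pow]
  exact ⟨_, by rw [resultant_mul_left_of_monic hgm hhm, hg', hh', mul_one]⟩

lemma sum_mulChar_resultant_eq_zero {f : F[X]} (hf : f.Monic) (hsep : f.Separable)
    (hdeg : f.natDegree ≠ 0) {χ : MulChar F ℂ} (hχ : χ ≠ 1) {n : ℕ} (hn : f.natDegree ≤ n) :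
    ∑ G : MonicDegreeEq F n, χ (resultant f G.1) = 0 := by
  obtain ⟨a, ha⟩ := MulChar.ne_one_iff.1 hχ
  obtain ⟨u, hu⟩ := exists_resultant_eq hf hsep hdeg a
  have hcop : IsCoprime f u := by
    by_contra h
    exact a.ne_zero (hu ▸ resultant_eq_zero_iff.2 ⟨.inl hf.ne_zero, h⟩)
  refine eq_zero_of_mul_eq_self_left ha ?_
  rw [Finset.mul_sum]
  refine Fintype.sum_bijective (twistResidue hf hn u)
    (Finite.injective_iff_bijective.1 (twistResidue_injective hf hn hcop)) _ _ fun G ↦ ?_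
  rw [resultant_eq_of_dvd_sub hf (dvd_twistResidue_sub hf hn u G),
    resultant_mul_right_of_monic hf, hu, map_mul]

lemma sum_mulChar_resultant_left_eq_zero {f : F[X]} (hf : f.Monic) (hsep : f.Separable)
    (hdeg : f.natDegree ≠ 0) {χ : MulChar F ℂ} (hχ : χ ≠ 1) {n : ℕ} (hn : f.natDegree ≤ n) :
    ∑ G : MonicDegreeEq F n, χ (resultant G.1 f) = 0 := by
  have hcomm (G : MonicDegreeEq F n) :
      χ (resultant G.1 f) = χ ((-1) ^ (n * f.natDegree)) * χ (resultant f G.1) := by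
    rw [resultant_comm, G.natDegree, map_mul]
  simp_rw [hcomm, ← Finset.mul_sum, sum_mulChar_resultant_eq_zero hf hsep hdeg hχ hn, mul_zero]

end Twist

section WeilBound

variable {F : Type*} [Field F] [Finite F]

lemma exists_multiset_sum_mulChar_norm_eq {f : F[X]} (hf : f.Monic) (hsep : f.Separable)
    (hdeg : f.natDegree ≠ 0) {χ : MulChar F ℂ} (hχ : χ ≠ 1) {K : ℕ → Type*} [∀ k, Field (K k)]
    [∀ k, Fintype (K k)] [∀ k, Algebra F (K k)] (hK : ∀ k, Module.finrank F (K k) = k + 1) :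
    ∃ s : Multiset ℂ, Multiset.card s = f.natDegree - 1 ∧ ∀ n,
      ∑ x : K n, χ (Algebra.norm F (aeval x f)) = -(s.map (· ^ (n + 1))).sum := by
  simp_rw [norm_aeval_eq_resultant_adjoinCharpoly]
  refine exists_multiset_powerSum_of_newton
    (c := fun n ↦ ∑ G : MonicDegreeEq F n, χ (resultant G.1 f)) ?_ (fun n hn ↦ ?_) fun n ↦ ?_
  · have hone (G : MonicDegreeEq F 0) : χ (resultant G.1 f) = 1 := by
      rw [(G.monic.natDegree_eq_zero).1 G.natDegree]
      simp
    have hcard : Fintype.card (MonicDegreeEq F 0) = 1 := Fintype.card_eq_one_iff.2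
      ⟨.mk 1 monic_one natDegree_one, fun G ↦
        Subtype.ext (G.monic.natDegree_eq_zero.1 G.natDegree)⟩
    simp_rw [hone, Finset.sum_const, Finset.card_univ, hcard, one_smul]
  · exact sum_mulChar_resultant_left_eq_zero hf hsep hdeg hχ (by lia)
  · exact succ_mul_sum_monicDegreeEq hK (φ := fun G ↦ χ (resultant G f))
      (fun G H hG hH ↦ by rw [resultant_mul_left_of_monic hG hH, map_mul]) n

lemma exists_aeval_eq_zero_of_natDegree_dvd_finrank {F K : Type*} [Field F] [Field K] [Finite K]
    [Algebra F K] {g : F[X]} (hg : Irreducible g) (h : g.natDegree ∣ Module.finrank F K) :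
    ∃ α : K, aeval α g = 0 := by
  have := Fact.mk hg
  have hfinrank : Module.finrank F (AdjoinRoot g) = g.natDegree :=
    finrank_quotient_span_eq_natDegree
  obtain ⟨φ⟩ := FiniteField.nonempty_algHom_of_finrank_dvd (F := F) (K := AdjoinRoot g) (L := K)
    (hfinrank ▸ h)
  exact ⟨φ (AdjoinRoot.root g), by
    rw [aeval_algHom_apply, AdjoinRoot.aeval_eq, AdjoinRoot.mk_self, map_zero]⟩

lemma norm_multiset_sum_le_card_mul {E : Type*} [SeminormedAddCommGroup E] {s : Multiset E} {r : ℝ}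
    (h : ∀ z ∈ s, ‖z‖ ≤ r) : ‖s.sum‖ ≤ Multiset.card s * r := by
  refine (norm_multiset_sum_le s).trans ?_
  simpa using Multiset.sum_le_card_nsmul (s.map norm) r (by simpa using h)

lemma sum_mulChar_norm_aeval_of_finrank_eq_one {F K : Type*} [Field F] [Fintype F] [Field K]
    [Fintype K] [Algebra F K] (hK : Module.finrank F K = 1) (f : F[X]) (χ : MulChar F ℂ) :
    ∑ x : K, χ (Algebra.norm F (aeval x f)) = ∑ x : F, χ (f.eval x) := by
  have hbij : Function.Bijective (algebraMap F K) :=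
    (Fintype.bijective_iff_injective_and_card _).2 ⟨(algebraMap F K).injective, by
      rw [Module.card_eq_pow_finrank (K := F) (V := K), hK, pow_one]⟩
  refine (Fintype.sum_bijective _ hbij _ _ fun x ↦ ?_).symm
  rw [aeval_algebraMap_apply, Algebra.norm_algebraMap, hK, pow_one, coe_aeval_eq_eval]

lemma norm_sum_mulChar_norm_aeval_le_pow {F K : Type*} [Field F] [Fintype F] [Field K] [Fintype K]
    [Algebra F K] {f g : F[X]} (hsep : f.Separable) (hg : Irreducible g) (hgf : g ∣ f)
    {χ : MulChar F ℂ} (hχ : χ ≠ 1) {n : ℕ} (hn : n ≠ 0)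
    (hK : Module.finrank F K = 2 * (g.natDegree * (2 * f.natDegree + 4) * n)) :
    ‖∑ x : K, χ (Algebra.norm F (aeval x f))‖ ≤
      (Fintype.card F - 1) * (2 * f.natDegree + 2) * √(Fintype.card F) ^ Module.finrank F K := by
  obtain ⟨α, hα⟩ := exists_aeval_eq_zero_of_natDegree_dvd_finrank (K := K) hg
    ⟨2 * ((2 * f.natDegree + 4) * n), by rw [hK]; ring⟩
  have hα' : aeval α f = 0 := aeval_eq_zero_of_dvd_aeval_eq_zero hgf hα
  have hlarge : 2 * f.natDegree + 3 <
      Fintype.card F ^ (g.natDegree * (2 * f.natDegree + 4) * n) := calc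
    2 * f.natDegree + 3 < 1 * (2 * f.natDegree + 4) * 1 := by lia
    _ ≤ g.natDegree * (2 * f.natDegree + 4) * n := by
      gcongr
      exacts [hg.natDegree_pos, Nat.one_le_iff_ne_zero.2 hn]
    _ ≤ _ := (Nat.lt_pow_self Fintype.one_lt_card).le
  refine (norm_sum_mulChar_norm_aeval_le hχ hK hlarge hα'
    (hsep.aeval_derivative_ne_zero hα')).trans_eq ?_
  rw [hK, pow_mul √_, Real.sq_sqrt (Nat.cast_nonneg _)]

lemma norm_sum_mulChar_eval_le_of_monic {F : Type*} [Field F] [Fintype F] {f : F[X]} (hf : f.Monic)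
    (hsep : f.Separable) (hdeg : f.natDegree ≠ 0) {χ : MulChar F ℂ} (hχ : χ ≠ 1) :
    ‖∑ x : F, χ (f.eval x)‖ ≤ (f.natDegree - 1 : ℕ) * √(Fintype.card F) := by
  obtain ⟨p, _⟩ := CharP.exists F
  have : Fact p.Prime := ⟨CharP.char_is_prime F p⟩
  let K (k : ℕ) : Type := FiniteField.Extension F p (k + 1)
  let (k : ℕ) : Field (K k) := inferInstanceAs (Field (FiniteField.Extension F p (k + 1)))
  let (k : ℕ) : Fintype (K k) := @Fintype.ofFinite (FiniteField.Extension F p (k + 1)) _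
  let (k : ℕ) : Algebra F (K k) :=
    inferInstanceAs (Algebra F (FiniteField.Extension F p (k + 1)))
  have hK (k : ℕ) : Module.finrank F (K k) = k + 1 := FiniteField.finrank_extension F p (k + 1)
  obtain ⟨s, hs, hsum⟩ := exists_multiset_sum_mulChar_norm_eq hf hsep hdeg hχ hK
  obtain ⟨g, -, hg, hgf⟩ := exists_monic_irreducible_factor f
    (not_isUnit_of_natDegree_pos f hdeg.bot_lt)
  set N := 2 * (g.natDegree * (2 * f.natDegree + 4)) with hN
  have hN0 : N ≠ 0 := by
    have := hg.natDegree_pos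
    positivity
  have hbound : ∀ z ∈ s, ‖z‖ ≤ √(Fintype.card F) := fun z hz ↦ by
    refine norm_le_of_norm_powerSum_mul_le (Real.sqrt_pos.2 (Nat.cast_pos.2 Fintype.card_pos)) hN0
      (C := (Fintype.card F - 1) * (2 * f.natDegree + 2)) (fun n hn ↦ ?_) hz
    have hNn : N * n - 1 + 1 = N * n := Nat.sub_add_cancel (Nat.mul_pos hN0.bot_lt hn)
    have hrank : Module.finrank F (K (N * n - 1)) = N * n := (hK _).trans hNn
    have := norm_sum_mulChar_norm_aeval_le_pow (K := K (N * n - 1)) hsep hg hgf hχ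
      (Nat.one_le_iff_ne_zero.1 hn) (by rw [hrank, hN]; ring)
    rwa [hsum, norm_neg, hNn, hrank] at this
  rw [← sum_mulChar_norm_aeval_of_finrank_eq_one (hK 0), hsum, norm_neg, ← hs]
  simpa using norm_multiset_sum_le_card_mul hbound

theorem norm_sum_mulChar_eval_le {F : Type*} [Field F] [Fintype F] {f : F[X]}
    (hsep : f.Separable) (hdeg : f.natDegree ≠ 0) {χ : MulChar F ℂ} (hχ : χ ≠ 1) :
    ‖∑ x : F, χ (f.eval x)‖ ≤ (f.natDegree - 1 : ℕ) * √(Fintype.card F) := by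
  have hf0 : f ≠ 0 := by
    rintro rfl
    exact hdeg natDegree_zero
  have hlc : f.leadingCoeff⁻¹ ≠ 0 := inv_ne_zero (leadingCoeff_ne_zero.2 hf0)
  have hmonic := norm_sum_mulChar_eval_le_of_monic (f := f * C f.leadingCoeff⁻¹)
    (monic_mul_leadingCoeff_inv hf0) (hsep.mul_unit (isUnit_C.2 hlc.isUnit))
    (by rwa [natDegree_mul_C hlc]) hχ
  simp_rw [eval_mul, eval_C, map_mul, ← Finset.sum_mul, natDegree_mul_C hlc, norm_mul] at hmonic
  rwa [← hlc.isUnit.unit_spec, norm_mulChar_coe_units, mul_one] at hmonic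

end WeilBound

/-! ### Character sums modulo prime powers -/

section ResidueClasses

variable {M : Type*} [AddCommMonoid M]

lemma sum_zmod_eq_sum_range (q : ℕ) [NeZero q] (f : ZMod q → M) :
    ∑ z, f z = ∑ n ∈ Finset.range q, f n :=
  Finset.sum_nbij' ZMod.val (fun n ↦ (n : ZMod q))
    (fun z _ ↦ Finset.mem_range.2 z.val_lt) (fun _ _ ↦ Finset.mem_univ _)
    (fun z _ ↦ ZMod.natCast_zmod_val z)
    (fun _ hn ↦ ZMod.val_cast_of_lt (Finset.mem_range.1 hn))
    (fun z _ ↦ by rw [ZMod.natCast_zmod_val])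

lemma sum_range_mul_eq_sum_sum (f : ℕ → M) (a b : ℕ) :
    ∑ n ∈ Finset.range (a * b), f n =
      ∑ j ∈ Finset.range b, ∑ i ∈ Finset.range a, f (i + a * j) := by
  induction b with
  | zero => simp
  | succ b ih =>
    rw [mul_add_one, Finset.sum_range_add, ih, Finset.sum_range_succ]
    simp only [add_comm]

lemma nsmul_sum_zmod_eq_sum_sum (q d : ℕ) [NeZero q] [NeZero d] (f : ZMod q → M) :
    d • ∑ z, f z = ∑ a : ZMod d, ∑ y, f (a.val + d * y) := by
  calc d • ∑ z, f z = ∑ n ∈ Finset.range (q * d), f n := by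
        simp [sum_range_mul_eq_sum_sum, sum_zmod_eq_sum_range]
    _ = ∑ a ∈ Finset.range d, ∑ y ∈ Finset.range q, f (a + d * y) := by
        simp [mul_comm q d, sum_range_mul_eq_sum_sum, Finset.sum_comm (s := Finset.range q)]
    _ = ∑ a : ZMod d, ∑ y, f (a.val + d * y) := by
        rw [sum_zmod_eq_sum_range d]
        refine Finset.sum_congr rfl fun a ha ↦ ?_
        rw [ZMod.val_cast_of_lt (Finset.mem_range.1 ha), sum_zmod_eq_sum_range q]

end ResidueClasses

lemma map_intCastRingHom_eq_zero_iff {n : ℕ} {G : ℤ[X]} :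
    G.map (Int.castRingHom (ZMod n)) = 0 ↔ C (n : ℤ) ∣ G := by
  rw [C_dvd_iff_dvd_coeff, Polynomial.ext_iff]
  simp [ZMod.intCast_zmod_eq_zero_iff_dvd]

lemma sub_dvd_aeval_sub {R A : Type*} [CommSemiring R] [CommRing A] [Algebra R A] (a b : A)
    (P : R[X]) : a - b ∣ aeval a P - aeval b P := by
  simpa only [← eval_map_algebraMap] using sub_dvd_eval_sub a b (P.map (algebraMap R A))

lemma aeval_eq_eval_map_castRingHom {R : Type*} [CommRing R] (z : R) (P : ℤ[X]) :
    aeval z P = (P.map (Int.castRingHom R)).eval z := by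
  rw [← algebraMap_int_eq, eval_map_algebraMap]

lemma castHom_aeval {m n : ℕ} (h : m ∣ n) (z : ZMod n) (P : ℤ[X]) :
    ZMod.castHom h (ZMod m) (aeval z P) = aeval (ZMod.castHom h (ZMod m) z) P :=
  (aeval_algHom_apply (ZMod.castHom h (ZMod m)).toIntAlgHom z P).symm

lemma castHom_val_add_mul {m n : ℕ} [NeZero m] (h : m ∣ n) (a : ZMod m) (y : ZMod n) :
    ZMod.castHom h (ZMod m) (a.val + m * y) = a := by
  rw [map_add, map_mul, map_natCast, map_natCast, ZMod.natCast_self, zero_mul, add_zero,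
    ZMod.natCast_zmod_val]

section PrimePower

variable {p e : ℕ}

lemma isUnit_add_pow_mul {c : ZMod (p ^ e)} (hc : IsUnit c) (x : ZMod (p ^ e)) {s : ℕ}
    (hs : s ≠ 0) : IsUnit (c + (p : ZMod (p ^ e)) ^ s * x) := by
  have hp : IsNilpotent (p : ZMod (p ^ e)) := ⟨e, by rw [← Nat.cast_pow, ZMod.natCast_self]⟩
  exact ((Commute.all _ _).isNilpotent_mul_right
    (hp.pow_of_pos hs)).isUnit_add_left_of_commute hc (Commute.all _ _)

lemma sum_one_add_pow_mul_eq_zero [NeZero (p ^ e)] {χ : MulChar (ZMod (p ^ e)) ℂ} {M s : ℕ}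
    (hχ : ∃ x, χ (1 + (p : ZMod (p ^ e)) ^ M * x) ≠ 1) (hs : s ≠ 0) (hsM : s ≤ M) :
    ∑ y, χ (1 + (p : ZMod (p ^ e)) ^ s * y) = 0 := by
  obtain ⟨x, hx⟩ := hχ
  set x₀ := (p : ZMod (p ^ e)) ^ (M - s) * x with hx₀
  have hsx : (p : ZMod (p ^ e)) ^ s * x₀ = (p : ZMod (p ^ e)) ^ M * x := by
    rw [hx₀, ← mul_assoc, pow_mul_pow_sub _ hsM]
  obtain ⟨v, hv⟩ := isUnit_add_pow_mul isUnit_one x₀ hs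
  have hinv : χ v * ∑ y, χ (1 + (p : ZMod (p ^ e)) ^ s * y) =
      ∑ y, χ (1 + (p : ZMod (p ^ e)) ^ s * y) := by
    rw [Finset.mul_sum]
    refine Fintype.sum_equiv (v.mulLeft.trans (Equiv.addLeft x₀)) _ _ fun y ↦ ?_
    rw [← map_mul, Equiv.trans_apply, Units.mulLeft_apply, Equiv.coe_addLeft, hv]
    ring_nf
  rw [hv, hsx] at hinv
  exact (mul_left_eq_self₀.1 hinv).resolve_left hx

variable [Fact p.Prime]

lemma isUnit_intCast_of_not_dvd {c : ℤ} (hc : ¬ (p : ℤ) ∣ c) : IsUnit (c : ZMod (p ^ e)) := by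
  rw [ZMod.coe_int_isUnit_iff_isCoprime, Nat.cast_pow]
  exact ((Nat.prime_iff_prime_int.1 Fact.out).coprime_iff_not_dvd.2 hc).pow_left

lemma isUnit_iff_castHom_ne_zero (he : e ≠ 0) {z : ZMod (p ^ e)} :
    IsUnit z ↔ ZMod.castHom (dvd_pow_self p he) (ZMod p) z ≠ 0 := by
  refine ⟨fun hz ↦ (hz.map _).ne_zero, fun hz ↦ ?_⟩
  obtain ⟨n, rfl⟩ := ZMod.intCast_surjective z
  rw [map_intCast, Ne, ZMod.intCast_zmod_eq_zero_iff_dvd] at hz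
  exact isUnit_intCast_of_not_dvd hz

lemma bijective_aeval_of_natDegree_map_eq_one {G : ℤ[X]}
    (hG : (G.map (Int.castRingHom (ZMod p))).natDegree = 1) :
    Function.Bijective fun y : ZMod (p ^ e) ↦ aeval y G := by
  have : NeZero (p ^ e) := ⟨pow_ne_zero _ (Fact.out : p.Prime).ne_zero⟩
  have hlin : C (p : ℤ) ∣ G - (C (G.coeff 1) * X + C (G.coeff 0)) := by
    rw [← map_intCastRingHom_eq_zero_iff, Polynomial.map_sub, sub_eq_zero,
      eq_X_add_C_of_natDegree_le_one hG.le]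
    simp
  obtain ⟨H, hH⟩ := hlin
  have hunit : ¬ (p : ℤ) ∣ G.coeff 1 := by
    rw [← ZMod.intCast_zmod_eq_zero_iff_dvd, ← eq_intCast (Int.castRingHom _), ← coeff_map, ← hG]
    exact leadingCoeff_ne_zero.2 (ne_zero_of_natDegree_gt (hG ▸ one_pos))
  have hGval (y : ZMod (p ^ e)) : aeval y G = G.coeff 1 * y + G.coeff 0 + p * aeval y H := by
    have hy := congrArg (aeval y) hH
    simp only [map_sub, map_add, map_mul, aeval_X, eq_intCast, map_intCast,
      map_natCast] at hy
    linear_combination hy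
  refine Finite.injective_iff_bijective.1 fun y z hyz ↦ sub_eq_zero.1 ?_
  obtain ⟨w, hw⟩ := sub_dvd_aeval_sub y z H
  refine ((isUnit_add_pow_mul (isUnit_intCast_of_not_dvd hunit) w
    one_ne_zero).mul_left_eq_zero).1 ?_
  simp only [hGval] at hyz
  linear_combination hyz - (p : ZMod (p ^ e)) * hw

lemma sum_add_pow_mul_aeval_eq_zero [NeZero (p ^ e)] {χ : MulChar (ZMod (p ^ e)) ℂ} {M s : ℕ}
    (hχ : ∃ x, χ (1 + (p : ZMod (p ^ e)) ^ M * x) ≠ 1) (hs : s ≠ 0) (hsM : s ≤ M) {c : ℤ}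
    (hc : ¬ (p : ℤ) ∣ c) {G : ℤ[X]} (hG : (G.map (Int.castRingHom (ZMod p))).natDegree = 1) :
    ∑ y : ZMod (p ^ e), χ (c + (p : ZMod (p ^ e)) ^ s * aeval y G) = 0 := by
  obtain ⟨u, hu⟩ := isUnit_intCast_of_not_dvd (e := e) hc
  calc ∑ y : ZMod (p ^ e), χ (c + (p : ZMod (p ^ e)) ^ s * aeval y G)
      = ∑ y : ZMod (p ^ e), χ (c + (p : ZMod (p ^ e)) ^ s * y) :=
        (bijective_aeval_of_natDegree_map_eq_one hG).sum_comp
          fun y ↦ χ ((c : ZMod (p ^ e)) + (p : ZMod (p ^ e)) ^ s * y)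
    _ = ∑ y, χ (u * (1 + (p : ZMod (p ^ e)) ^ s * y)) := by
        rw [← hu, ← Equiv.sum_comp u.mulLeft]
        refine Finset.sum_congr rfl fun y _ ↦ ?_
        rw [Units.mulLeft_apply, mul_add, mul_one, mul_left_comm]
    _ = 0 := by
        simp only [map_mul, ← Finset.mul_sum, sum_one_add_pow_mul_eq_zero hχ hs hsM, mul_zero]

end PrimePower

section LocalExpansion

lemma exists_comp_C_mul_X_eq {R : Type*} [CommRing R] [IsDomain R] [WfDvdMonoid R] {π : R}
    (hπ : Prime π) {T : R[X]} {m : ℕ} (hm : m ≠ 0) (hT : ¬ π ∣ T.coeff m) :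
    ∃ t, t ≠ 0 ∧ t ≤ m ∧ ∃ H : R[X], T.comp (C π * X) = C (T.coeff 0) + C (π ^ t) * H ∧
      H.coeff 0 = 0 ∧ ¬ C π ∣ H ∧ ∀ j, t < j → π ∣ H.coeff j := by
  have hcoeff {j : ℕ} (hj : j ≠ 0) :
      (T.comp (C π * X) - C (T.coeff 0)).coeff j = π ^ j * T.coeff j := by
    rw [coeff_sub, comp_C_mul_X_coeff, coeff_C_of_ne_zero hj, sub_zero, mul_comm]
  have hne : T.comp (C π * X) - C (T.coeff 0) ≠ 0 := fun h ↦ by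
    have := hcoeff hm
    rw [h, coeff_zero, eq_comm, mul_eq_zero_iff_left (pow_ne_zero _ hπ.ne_zero)] at this
    exact hT (this ▸ dvd_zero π)
  obtain ⟨H, hH, hndvd⟩ := (FiniteMultiplicity.of_prime_left
    (prime_C_iff.2 hπ) hne).exists_eq_pow_mul_and_not_dvd
  generalize multiplicity (C π) (T.comp (C π * X) - C (T.coeff 0)) = t at hH
  rw [← C_pow] at hH
  have hHcoeff {j : ℕ} (hj : j ≠ 0) : π ^ t * H.coeff j = π ^ j * T.coeff j := by
    rw [← hcoeff hj, hH, coeff_C_mul]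
  have hH₀ : H.coeff 0 = 0 := by
    have := congrArg (coeff · 0) hH
    rw [coeff_C_mul, coeff_sub, comp_C_mul_X_coeff, coeff_C_zero, pow_zero, mul_one, sub_self,
      eq_comm, mul_eq_zero_iff_left (pow_ne_zero _ hπ.ne_zero)] at this
    exact this
  have hdvd {j : ℕ} (hj : t < j) : π ∣ H.coeff j := by
    have h := hHcoeff (Nat.ne_zero_of_lt hj)
    rw [← pow_mul_pow_sub π hj.le, mul_assoc] at h
    rw [mul_left_cancel₀ (pow_ne_zero t hπ.ne_zero) h]
    exact (dvd_pow_self π (Nat.sub_ne_zero_of_lt hj)).mul_right _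
  refine ⟨t, ?_, ?_, H, by rw [← hH]; ring, hH₀, hndvd, fun _ ↦ hdvd⟩
  · rintro rfl
    refine hndvd (C_dvd_iff_dvd_coeff _ _ |>.2 fun j ↦ ?_)
    rcases eq_or_ne j 0 with rfl | hj
    · exact hH₀ ▸ dvd_zero π
    · exact hdvd (Nat.pos_of_ne_zero hj)
  · by_contra! h
    refine hT ((mul_dvd_mul_iff_left (pow_ne_zero m hπ.ne_zero)).1 ?_)
    rw [← hHcoeff hm, ← pow_succ]
    exact (pow_dvd_pow π h).mul_right _

lemma coeff_comp_X_add_C_rootMultiplicity_ne_zero {R : Type*} [CommRing R] {P : R[X]} (hP : P ≠ 0)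
    (a : R) : (P.comp (X + C a)).coeff (P.rootMultiplicity a) ≠ 0 := by
  rw [rootMultiplicity_eq_natTrailingDegree, coeff_natTrailingDegree_ne_zero]
  exact comp_X_add_C_ne_zero_iff.2 hP

variable {p : ℕ} [Fact p.Prime]

lemma not_dvd_coeff_comp_X_add_C {G : ℤ[X]}
    (hG : derivative (G.map (Int.castRingHom (ZMod p))) ≠ 0) (z : ℤ) :
    ¬ (p : ℤ) ∣ (G.comp (X + C z)).coeff
      ((derivative (G.map (Int.castRingHom (ZMod p)))).rootMultiplicity (z : ZMod p) + 1) := by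
  intro hdvd
  refine coeff_comp_X_add_C_rootMultiplicity_ne_zero hG (z : ZMod p) ?_
  have hmap : (G.comp (X + C z)).map (Int.castRingHom (ZMod p)) =
      (G.map (Int.castRingHom (ZMod p))).comp (X + C (z : ZMod p)) := by
    simp [Polynomial.map_comp]
  have hder := derivative_comp (G.map (Int.castRingHom (ZMod p))) (X + C (z : ZMod p))
  rw [derivative_add, derivative_X, derivative_C, add_zero, one_mul, ← hmap] at hder
  rw [← hder, coeff_derivative, coeff_map, eq_intCast,
    (ZMod.intCast_zmod_eq_zero_iff_dvd _ _).2 hdvd, zero_mul]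

lemma exists_aeval_add_mul_eq {G : ℤ[X]}
    (hG : derivative (G.map (Int.castRingHom (ZMod p))) ≠ 0) (z : ℤ) :
    ∃ t, t ≠ 0 ∧
      t ≤ (derivative (G.map (Int.castRingHom (ZMod p)))).rootMultiplicity (z : ZMod p) + 1 ∧
      ∃ H : ℤ[X], (H.map (Int.castRingHom (ZMod p))).natDegree ≠ 0 ∧
        (H.map (Int.castRingHom (ZMod p))).natDegree ≤ t ∧
        ∀ {q : ℕ} (y : ZMod q), aeval (z + p * y : ZMod q) G =
          (G.eval z : ℤ) + (p : ZMod q) ^ t * aeval y H := by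
  obtain ⟨t, ht, htle, H, hH, hH₀, hHndvd, hHdvd⟩ := exists_comp_C_mul_X_eq
    (Nat.prime_iff_prime_int.1 Fact.out) (Nat.succ_ne_zero _) (not_dvd_coeff_comp_X_add_C hG z)
  refine ⟨t, ht, htle, H, fun hdeg ↦ hHndvd ?_, ?_, fun {q} y ↦ ?_⟩
  · rw [← map_intCastRingHom_eq_zero_iff, eq_C_of_natDegree_eq_zero hdeg, coeff_map, hH₀, map_zero,
      C_0]
  · refine natDegree_le_iff_coeff_eq_zero.2 fun j hj ↦ ?_
    rw [coeff_map, eq_intCast, ZMod.intCast_zmod_eq_zero_iff_dvd]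
    exact hHdvd j hj
  · have hcoeff : (G.comp (X + C z)).coeff 0 = G.eval z := by
      simp [coeff_zero_eq_eval_zero, eval_comp]
    have hy := congrArg (aeval y) hH
    rw [hcoeff] at hy
    simpa [aeval_comp, add_comm] using hy

end LocalExpansion

/-- The sum of `χ (F u)` over the units `u` modulo `q`, the character sum attached to `χ` in the
expansion of the number of solutions of `∏ F(vᵢ) = w` over the characters modulo `q`. -/
noncomputable def unitCharSum {q : ℕ} [NeZero q] (χ : DirichletCharacter ℂ q) (F : ℤ[X]) : ℂ :=
  ∑ u : (ZMod q)ˣ, χ (aeval (u : ZMod q) F)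

lemma sum_units_eq_sum_one_mul {R : Type*} [CommRing R] [Fintype R] [Fintype Rˣ] (f : R → ℂ) :
    ∑ u : Rˣ, f u = ∑ z, (1 : MulChar R ℂ) z * f z := by
  classical
  have hsupp (z : R) (hz : (1 : MulChar R ℂ) z * f z ≠ 0) : IsUnit z := by
    by_contra h
    exact hz (by rw [MulChar.map_nonunit _ h, zero_mul])
  refine Finset.sum_bij_ne_zero (fun u _ _ ↦ (u : R)) (fun _ _ _ ↦ Finset.mem_univ _)
    (fun _ _ _ _ _ _ h ↦ Units.ext h) (fun z _ hz ↦ ?_) fun u _ _ ↦ ?_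
  · obtain ⟨u, rfl⟩ := hsupp z hz
    exact ⟨u, Finset.mem_univ _, right_ne_zero_of_mul hz, rfl⟩
  · rw [MulChar.one_apply_coe, one_mul]

lemma unitCharSum_eq_sum_one_mul {q : ℕ} [NeZero q] (χ : DirichletCharacter ℂ q) (F : ℤ[X]) :
    unitCharSum χ F = ∑ z, (1 : DirichletCharacter ℂ q) z * χ (aeval z F) :=
  sum_units_eq_sum_one_mul fun z ↦ χ (aeval z F)

section Descent

lemma sum_rootMultiplicity_le_natDegree {R : Type*} [CommRing R] [IsDomain R] [Fintype R]
    (P : R[X]) : ∑ a, P.rootMultiplicity a ≤ P.natDegree := by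
  classical
  simp only [← count_roots]
  rw [Multiset.sum_count_eq_card fun a _ ↦ Finset.mem_univ a]
  exact card_roots' P

lemma rootMultiplicity_le_natDegree {R : Type*} [CommRing R] [IsDomain R] (a : R) (P : R[X]) :
    P.rootMultiplicity a ≤ P.natDegree := by
  classical
  rw [← count_roots]
  exact (Multiset.count_le_card a _).trans (card_roots' P)

lemma derivative_ne_zero_of_natDegree_lt {R : Type*} [CommRing R] [IsDomain R] {p : ℕ}
    [CharP R p] {P : R[X]} (h₀ : P.natDegree ≠ 0) (hp : P.natDegree < p) : derivative P ≠ 0 := by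
  obtain ⟨n, hn⟩ := Nat.exists_eq_succ_of_ne_zero h₀
  have hcast : ((n + 1 : ℕ) : R) ≠ 0 := fun h ↦
    Nat.not_dvd_of_pos_of_lt n.succ_pos (hn ▸ hp) ((CharP.cast_eq_zero_iff R p _).1 h)
  have hcoeff : (derivative P).coeff n = P.leadingCoeff * (n + 1 : ℕ) := by
    rw [coeff_derivative, leadingCoeff, hn, Nat.cast_succ]
  intro h
  rw [h, coeff_zero, eq_comm, mul_eq_zero_iff_right hcast, leadingCoeff_eq_zero] at hcoeff
  exact h₀ (hcoeff ▸ natDegree_zero)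

lemma norm_sum_mulChar_comp_le_card {ι R : Type*} [Fintype ι] [CommRing R] [Finite R]
    (χ : MulChar R ℂ) (g : ι → R) : ‖∑ i, χ (g i)‖ ≤ Fintype.card ι := by
  simpa using norm_sum_le_of_le Finset.univ fun i _ ↦ norm_mulChar_le_one χ (g i)

variable {p : ℕ} [Fact p.Prime]

lemma norm_sum_zmod_mul_le_of_residueClasses {q : ℕ} [NeZero q] {f : ZMod q → ℂ} {P : (ZMod p)[X]}
    {W K : ℝ} (hW : 0 ≤ W) (hK : 0 ≤ K)
    (hf : ∀ a : ZMod p, ‖∑ y, f (a.val + p * y)‖ * W ≤ K * P.rootMultiplicity a) :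
    ‖∑ z, f z‖ * (W * p) ≤ K * P.natDegree := by
  calc ‖∑ z, f z‖ * (W * p) = ‖∑ a : ZMod p, ∑ y, f (a.val + p * y)‖ * W := by
        rw [← nsmul_sum_zmod_eq_sum_sum, nsmul_eq_mul, norm_mul, Complex.norm_natCast]
        ring
    _ ≤ (∑ a : ZMod p, ‖∑ y, f (a.val + p * y)‖) * W := by gcongr; exact norm_sum_le _ _
    _ ≤ ∑ a : ZMod p, K * P.rootMultiplicity a := by
        rw [Finset.sum_mul]
        exact Finset.sum_le_sum fun a _ ↦ hf a
    _ = K * (∑ a : ZMod p, P.rootMultiplicity a : ℕ) := by rw [← Finset.mul_sum, Nat.cast_sum]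
    _ ≤ K * P.natDegree := by gcongr; exact sum_rootMultiplicity_le_natDegree P

variable {e : ℕ} [NeZero (p ^ e)] {χ : MulChar (ZMod (p ^ e)) ℂ} {D M : ℕ}

lemma norm_sum_add_pow_mul_aeval_le (hχ : ∃ x, χ (1 + (p : ZMod (p ^ e)) ^ M * x) ≠ 1) {σ μ : ℕ}
    {c : ℤ} {G : ℤ[X]} (hσ : σ ≠ 0) (hσM : μ = 0 → σ ≤ M) (hc : ¬ (p : ℤ) ∣ c)
    (hG₀ : (G.map (Int.castRingHom (ZMod p))).natDegree ≠ 0)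
    (hG : (G.map (Int.castRingHom (ZMod p))).natDegree ≤ μ + 1) :
    ‖∑ y : ZMod (p ^ e), χ (c + (p : ZMod (p ^ e)) ^ σ * aeval y G)‖ ≤ (p : ℝ) ^ e * μ := by
  rcases Nat.eq_zero_or_pos μ with rfl | hμ
  · rw [sum_add_pow_mul_aeval_eq_zero hχ hσ (hσM rfl) hc (by lia)]
    simp
  · have hμ' : (1 : ℝ) ≤ μ := mod_cast hμ
    have htriv := norm_sum_mulChar_comp_le_card χ
      fun y : ZMod (p ^ e) ↦ c + (p : ZMod (p ^ e)) ^ σ * aeval y G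
    rw [ZMod.card, Nat.cast_pow] at htriv
    exact htriv.trans (le_mul_of_one_le_right (by positivity) hμ')

/- Splitting into the residue classes of `y` modulo `p`, the class of `a` contributes a sum of the
same shape, with `σ` increased by at most `μ_a + 1 ≤ D` and `μ` replaced by the multiplicity `μ_a`
of `a` as a root of `G'` modulo `p`; and `∑ μ_a ≤ μ`. So each factor `p` is gained at the expense of
increasing `σ` by at most `D`. -/
theorem norm_sum_add_pow_mul_aeval_mul_pow_le
    (hχ : ∃ x, χ (1 + (p : ZMod (p ^ e)) ^ M * x) ≠ 1) (hDp : D < p) (k : ℕ) :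
    ∀ {σ μ : ℕ} {c : ℤ} {G : ℤ[X]}, σ ≠ 0 → (μ = 0 → σ ≤ M) → σ + k * D < M + D → μ + 1 ≤ D →
      ¬ (p : ℤ) ∣ c → (G.map (Int.castRingHom (ZMod p))).natDegree ≠ 0 →
      (G.map (Int.castRingHom (ZMod p))).natDegree ≤ μ + 1 →
      ‖∑ y : ZMod (p ^ e), χ (c + (p : ZMod (p ^ e)) ^ σ * aeval y G)‖ * (p : ℝ) ^ k ≤
        (p : ℝ) ^ e * μ := by
  induction k with
  | zero =>
    intro σ μ c G hσ hσM _ _ hc hG₀ hG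
    rw [pow_zero, mul_one]
    exact norm_sum_add_pow_mul_aeval_le hχ hσ hσM hc hG₀ hG
  | succ k ih =>
    intro σ μ c G hσ _ hk hμD hc hG₀ hG
    have hder := derivative_ne_zero_of_natDegree_lt (p := p) hG₀ (by lia)
    have hderdeg := natDegree_derivative_le (G.map (Int.castRingHom (ZMod p)))
    have hclass (a : ZMod p) : ‖∑ y : ZMod (p ^ e), χ (c + (p : ZMod (p ^ e)) ^ σ *
        aeval (a.val + p * y) G)‖ * (p : ℝ) ^ k ≤
        (p : ℝ) ^ e * (derivative (G.map (Int.castRingHom (ZMod p)))).rootMultiplicity a := by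
      obtain ⟨t, ht, htle, H, hH₀, hH, hval⟩ := exists_aeval_add_mul_eq hder (a.val : ℤ)
      rw [Int.cast_natCast, ZMod.natCast_zmod_val] at htle
      have hmult := rootMultiplicity_le_natDegree a
        (derivative (G.map (Int.castRingHom (ZMod p))))
      have hc' : ¬ (p : ℤ) ∣ c + (p : ℤ) ^ σ * G.eval (a.val : ℤ) := by
        rwa [Int.dvd_add_left ((dvd_pow_self _ hσ).mul_right _)]
      have hexpand (y : ZMod (p ^ e)) :
          ((c + (p : ℤ) ^ σ * G.eval (a.val : ℤ) : ℤ) : ZMod (p ^ e)) +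
              (p : ZMod (p ^ e)) ^ (σ + t) * aeval y H =
            c + (p : ZMod (p ^ e)) ^ σ * aeval (a.val + p * y) G := by
        rw [← Int.cast_natCast (R := ZMod (p ^ e)) a.val, hval]
        push_cast
        ring
      have hsum := ih (σ := σ + t)
        (μ := (derivative (G.map (Int.castRingHom (ZMod p)))).rootMultiplicity a)
        (by lia) (by lia) (by lia) (by lia) hc' hH₀ (hH.trans htle)
      simpa only [hexpand] using hsum
    rw [pow_succ]
    refine (norm_sum_zmod_mul_le_of_residueClasses
      (f := fun y : ZMod (p ^ e) ↦ χ (c + (p : ZMod (p ^ e)) ^ σ * aeval y G))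
      (by positivity) (by positivity) hclass).trans ?_
    gcongr
    lia

lemma norm_sum_residueClass_aeval_mul_pow_le (hχ : ∃ x, χ (1 + (p : ZMod (p ^ e)) ^ M * x) ≠ 1)
    {F : ℤ[X]} (hF₀ : (F.map (Int.castRingHom (ZMod p))).natDegree ≠ 0)
    (hFp : (F.map (Int.castRingHom (ZMod p))).natDegree < p) {k : ℕ}
    (hk : k * (F.map (Int.castRingHom (ZMod p))).natDegree < M) {a : ZMod p}
    (ha : (F.map (Int.castRingHom (ZMod p))).eval a ≠ 0) :
    ‖∑ y : ZMod (p ^ e), χ (aeval (a.val + p * y) F)‖ * (p : ℝ) ^ k ≤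
      (p : ℝ) ^ e * (derivative (F.map (Int.castRingHom (ZMod p)))).rootMultiplicity a := by
  have hder := derivative_ne_zero_of_natDegree_lt (p := p) hF₀ hFp
  have hderdeg := natDegree_derivative_le (F.map (Int.castRingHom (ZMod p)))
  have hmult := rootMultiplicity_le_natDegree a (derivative (F.map (Int.castRingHom (ZMod p))))
  have hdvd : ¬ (p : ℤ) ∣ F.eval (a.val : ℤ) := by
    rwa [← ZMod.intCast_zmod_eq_zero_iff_dvd, ← eq_intCast (Int.castRingHom (ZMod p)),
      ← eval_map_apply, eq_intCast, Int.cast_natCast, ZMod.natCast_zmod_val]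
  obtain ⟨t, ht, htle, H, hH₀, hH, hval⟩ := exists_aeval_add_mul_eq hder (a.val : ℤ)
  simp only [Int.cast_natCast, ZMod.natCast_zmod_val] at htle hval
  simpa only [hval] using norm_sum_add_pow_mul_aeval_mul_pow_le hχ hFp k (σ := t)
    (μ := (derivative (F.map (Int.castRingHom (ZMod p)))).rootMultiplicity a) ht (by lia)
    (by lia) (by lia) hdvd hH₀ (hH.trans htle)

theorem norm_unitCharSum_mul_pow_le (he : e ≠ 0)
    (hχ : ∃ x, χ (1 + (p : ZMod (p ^ e)) ^ M * x) ≠ 1) {F : ℤ[X]}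
    (hF₀ : (F.map (Int.castRingHom (ZMod p))).natDegree ≠ 0)
    (hFp : (F.map (Int.castRingHom (ZMod p))).natDegree < p) {k : ℕ}
    (hk : k * (F.map (Int.castRingHom (ZMod p))).natDegree < M) :
    ‖unitCharSum χ F‖ * (p : ℝ) ^ (k + 1) ≤
      (p : ℝ) ^ e * ((F.map (Int.castRingHom (ZMod p))).natDegree - 1 : ℕ) := by
  rw [unitCharSum_eq_sum_one_mul, pow_succ]
  refine (norm_sum_zmod_mul_le_of_residueClasses (K := (p : ℝ) ^ e)
    (P := derivative (F.map (Int.castRingHom (ZMod p)))) (by positivity) (by positivity)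
    fun a ↦ ?_).trans (by gcongr; exact natDegree_derivative_le _)
  by_cases ha : a = 0 ∨ (F.map (Int.castRingHom (ZMod p))).eval a = 0
  · have hterm (y : ZMod (p ^ e)) : (1 : MulChar (ZMod (p ^ e)) ℂ) (a.val + p * y) *
        χ (aeval (a.val + p * y) F) = 0 := by
      rcases ha with ha | ha
      · rw [MulChar.map_nonunit, zero_mul]
        rwa [isUnit_iff_castHom_ne_zero he, castHom_val_add_mul (dvd_pow_self p he), not_not]
      · rw [χ.map_nonunit, mul_zero]
        rwa [isUnit_iff_castHom_ne_zero he, castHom_aeval,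
          castHom_val_add_mul (dvd_pow_self p he), aeval_eq_eval_map_castRingHom, not_not]
    simp only [hterm, Finset.sum_const_zero, norm_zero, zero_mul]
    positivity
  · obtain ⟨ha₀, haF⟩ := not_or.1 ha
    have hunit (y : ZMod (p ^ e)) : IsUnit (a.val + p * y : ZMod (p ^ e)) := by
      rwa [isUnit_iff_castHom_ne_zero he, castHom_val_add_mul (dvd_pow_self p he)]
    simpa only [MulChar.one_apply (hunit _), one_mul] using
      norm_sum_residueClass_aeval_mul_pow_le hχ hF₀ hFp hk haF

end Descent

section PrimeConductor

lemma nsmul_sum_comp_castHom {M : Type*} [AddCommMonoid M] {m n : ℕ} [NeZero m] [NeZero n]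
    (h : m ∣ n) (g : ZMod m → M) :
    m • ∑ z, g (ZMod.castHom h (ZMod m) z) = n • ∑ a, g a := by
  rw [nsmul_sum_zmod_eq_sum_sum n m fun z ↦ g (ZMod.castHom h (ZMod m) z)]
  simp only [castHom_val_add_mul h, Finset.sum_const, Finset.card_univ, ZMod.card, Finset.smul_sum]

variable {p : ℕ} [Fact p.Prime]

lemma changeLevel_dvd_pow_self_apply {e : ℕ} (he : e ≠ 0) (ψ : DirichletCharacter ℂ p)
    (z : ZMod (p ^ e)) : DirichletCharacter.changeLevel (dvd_pow_self p he) ψ z =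
      ψ (ZMod.castHom (dvd_pow_self p he) (ZMod p) z) := by
  by_cases hz : IsUnit z
  · obtain ⟨u, rfl⟩ := hz
    exact ψ.changeLevel_eq_cast_of_dvd _ u
  · rw [MulChar.map_nonunit _ hz, ψ.map_nonunit]
    rwa [isUnit_iff_castHom_ne_zero he, ← isUnit_iff_ne_zero] at hz

lemma mul_unitCharSum_changeLevel {e : ℕ} [NeZero (p ^ e)] (he : e ≠ 0)
    (ψ : DirichletCharacter ℂ p) (F : ℤ[X]) :
    p * unitCharSum (DirichletCharacter.changeLevel (dvd_pow_self p he) ψ) F =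
      (p : ℂ) ^ e * unitCharSum ψ F := by
  have h := nsmul_sum_comp_castHom (dvd_pow_self p he)
    fun a ↦ (1 : DirichletCharacter ℂ p) a * ψ (aeval a F)
  simp only [nsmul_eq_mul, Nat.cast_pow] at h
  rw [unitCharSum_eq_sum_one_mul, unitCharSum_eq_sum_one_mul, ← h,
    ← DirichletCharacter.changeLevel_one (dvd_pow_self p he)]
  simp only [changeLevel_dvd_pow_self_apply he, castHom_aeval]

lemma norm_unitCharSum_le {F : ℤ[X]} (hsep : (F.map (Int.castRingHom (ZMod p))).Separable)
    (hdeg : (F.map (Int.castRingHom (ZMod p))).natDegree ≠ 0) {ψ : DirichletCharacter ℂ p}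
    (hψ : ψ ≠ 1) :
    ‖unitCharSum ψ F‖ ≤ (F.map (Int.castRingHom (ZMod p))).natDegree * √p := by
  have hweil := norm_sum_mulChar_eval_le hsep hdeg hψ
  rw [ZMod.card, Nat.cast_pred (Nat.pos_of_ne_zero hdeg)] at hweil
  have hsplit : unitCharSum ψ F = ∑ a, ψ ((F.map (Int.castRingHom (ZMod p))).eval a) -
      ψ ((F.map (Int.castRingHom (ZMod p))).eval 0) := by
    rw [unitCharSum_eq_sum_one_mul, ← Finset.add_sum_erase _ _ (Finset.mem_univ 0),
      ← Finset.add_sum_erase _ (fun a ↦ ψ (eval a _)) (Finset.mem_univ 0), add_sub_cancel_left,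
      MulChar.map_zero, zero_mul, zero_add]
    refine Finset.sum_congr rfl fun a ha ↦ ?_
    rw [MulChar.one_apply (isUnit_iff_ne_zero.2 (Finset.ne_of_mem_erase ha)), one_mul,
      aeval_eq_eval_map_castRingHom]
  have hsqrt : 1 ≤ √(p : ℝ) := Real.one_le_sqrt.2 (mod_cast (Fact.out : p.Prime).one_le)
  calc ‖unitCharSum ψ F‖
      ≤ ((F.map (Int.castRingHom (ZMod p))).natDegree - 1) * √p + 1 := by
        rw [hsplit]
        exact (norm_sub_le _ _).trans (add_le_add hweil (norm_mulChar_le_one _ _))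
    _ ≤ (F.map (Int.castRingHom (ZMod p))).natDegree * √p := by linarith

lemma norm_unitCharSum_changeLevel_mul_sqrt_le {e : ℕ} [NeZero (p ^ e)] (he : e ≠ 0) {F : ℤ[X]}
    (hsep : (F.map (Int.castRingHom (ZMod p))).Separable)
    (hdeg : (F.map (Int.castRingHom (ZMod p))).natDegree ≠ 0) {ψ : DirichletCharacter ℂ p}
    (hψ : ψ ≠ 1) :
    ‖unitCharSum (DirichletCharacter.changeLevel (dvd_pow_self p he) ψ) F‖ * √p ≤
      p ^ e * (F.map (Int.castRingHom (ZMod p))).natDegree := by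
  have hpos : 0 < √(p : ℝ) := Real.sqrt_pos.2 (mod_cast (Fact.out : p.Prime).pos)
  have h := congrArg norm (mul_unitCharSum_changeLevel he ψ F)
  rw [norm_mul, norm_mul, norm_pow, Complex.norm_natCast] at h
  refine le_of_mul_le_mul_right ?_ hpos
  calc _ = (p : ℝ) * ‖unitCharSum (DirichletCharacter.changeLevel (dvd_pow_self p he) ψ) F‖ := by
        rw [mul_assoc, Real.mul_self_sqrt p.cast_nonneg, mul_comm]
    _ ≤ (p : ℝ) ^ e * ((F.map (Int.castRingHom (ZMod p))).natDegree * √p) := by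
        rw [h]
        gcongr
        exact norm_unitCharSum_le hsep hdeg hψ
    _ = _ := (mul_assoc _ _ _).symm

end PrimeConductor

section Conductor

lemma exists_apply_one_add_mul_ne_one {n d : ℕ} [NeZero n] {χ : DirichletCharacter ℂ n}
    (hd : d ∣ n) (hχ : ¬ χ.FactorsThrough d) : ∃ x, χ (1 + d * x) ≠ 1 := by
  rw [DirichletCharacter.factorsThrough_iff_ker_unitsMap hd, SetLike.not_le_iff_exists] at hχ
  obtain ⟨u, hu, huχ⟩ := hχ
  have hcast : ZMod.castHom hd (ZMod d) u = 1 := congrArg Units.val hu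
  obtain ⟨x, hx⟩ : (d : ZMod n) ∣ u - 1 := by
    obtain ⟨k, hk⟩ := ZMod.intCast_surjective (u - 1 : ZMod n)
    have hdk : (d : ℤ) ∣ k := by
      rw [← ZMod.intCast_zmod_eq_zero_iff_dvd, ← map_intCast (ZMod.castHom hd (ZMod d)), hk,
        map_sub, hcast, map_one, sub_self]
    simpa [hk] using map_dvd (Int.castRingHom (ZMod n)) hdk
  refine ⟨x, fun h ↦ huχ ?_⟩
  rw [← hx, add_sub_cancel] at h
  rwa [MonoidHom.mem_ker, ← Units.val_eq_one, MulChar.coe_toUnitHom]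

variable {p e : ℕ} [Fact p.Prime] [NeZero (p ^ e)]

lemma norm_unitCharSum_mul_pow_le_of_conductor {χ : DirichletCharacter ℂ (p ^ e)} {F : ℤ[X]}
    (hdeg : (F.map (Int.castRingHom (ZMod p))).natDegree ≠ 0)
    (hp : (F.map (Int.castRingHom (ZMod p))).natDegree < p) {M k : ℕ}
    (hχ : χ.conductor = p ^ (M + 1))
    (hk : k * (F.map (Int.castRingHom (ZMod p))).natDegree < M) :
    ‖unitCharSum χ F‖ * (p : ℝ) ^ (k + 1) ≤
      p ^ e * (F.map (Int.castRingHom (ZMod p))).natDegree := by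
  have hprime : p.Prime := Fact.out
  have hMe : M + 1 ≤ e :=
    (Nat.pow_dvd_pow_iff_le_right hprime.one_lt).1 (hχ ▸ χ.conductor_dvd_level)
  have hfactors : ¬ χ.FactorsThrough (p ^ M) := fun h ↦ by
    have hle := χ.conductor_dvd_of_mem_conductorSet (χ.mem_conductorSet_iff.2 h)
    rw [hχ, Nat.pow_dvd_pow_iff_le_right hprime.one_lt] at hle
    lia
  have hx := exists_apply_one_add_mul_ne_one (pow_dvd_pow p (by lia)) hfactors
  rw [Nat.cast_pow] at hx
  refine (norm_unitCharSum_mul_pow_le (by lia) hx hdeg hp hk).trans ?_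
  gcongr
  exact Nat.sub_le _ _

lemma rpow_inv_pow_le_pow_of_le_mul {x : ℝ} (hx : 1 ≤ x) {m n k : ℕ} (hn : n ≠ 0)
    (hm : m ≤ k * n) : (x ^ m) ^ (n : ℝ)⁻¹ ≤ x ^ k := by
  calc (x ^ m) ^ (n : ℝ)⁻¹ ≤ ((x ^ k) ^ n) ^ (n : ℝ)⁻¹ := by
        rw [← pow_mul]
        gcongr
    _ = x ^ k := Real.pow_rpow_inv_natCast (by positivity) hn

theorem norm_unitCharSum_mul_conductor_rpow_le {F : ℤ[X]} {D : ℕ}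
    (hD : (F.map (Int.castRingHom (ZMod p))).natDegree = D) (hD₀ : D ≠ 0) (hDp : D < p)
    (hsep : (F.map (Int.castRingHom (ZMod p))).Separable) {χ : DirichletCharacter ℂ (p ^ e)}
    (hχ : χ ≠ 1) :
    ‖unitCharSum χ F‖ * (χ.conductor : ℝ) ^ ((D + 1 : ℕ) : ℝ)⁻¹ ≤ p ^ e * D := by
  have hprime : p.Prime := Fact.out
  have hp1 : (1 : ℝ) ≤ p := mod_cast hprime.one_le
  obtain ⟨m, hme, hm⟩ := (Nat.dvd_prime_pow hprime).1 χ.conductor_dvd_level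
  rw [hm, Nat.cast_pow]
  match m with
  | 0 =>
    exact absurd (DirichletCharacter.eq_one_iff_conductor_eq_one.2 (hm.trans (pow_zero p))) hχ
  | 1 =>
    have hfactors : χ.FactorsThrough p := by
      simpa only [hm, pow_one] using χ.factorsThrough_conductor
    have hψ : hfactors.χ₀ ≠ 1 := fun h ↦ hχ <| by
      rw [hfactors.eq_changeLevel, h, DirichletCharacter.changeLevel_one]
    have hbound := norm_unitCharSum_changeLevel_mul_sqrt_le (e := e) (by lia) hsep (hD ▸ hD₀) hψ
    rw [← hfactors.eq_changeLevel, hD] at hbound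
    refine le_trans ?_ hbound
    rw [pow_one, Real.sqrt_eq_rpow, one_div]
    gcongr
    exact_mod_cast (by lia : 2 ≤ D + 1)
  | M + 2 =>
    have hk := Nat.lt_div_mul_add (a := M) (Nat.pos_of_ne_zero hD₀)
    have hbound := norm_unitCharSum_mul_pow_le_of_conductor (k := M / D) (hD ▸ hD₀) (hD ▸ hDp) hm
      (by rw [hD]; exact Nat.lt_succ_of_le (Nat.div_mul_le_self M D))
    rw [hD] at hbound
    refine le_trans ?_ hbound
    gcongr
    exact rpow_inv_pow_le_pow_of_le_mul hp1 D.succ_ne_zero (by rw [add_one_mul, mul_add_one]; lia)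

end Conductor

/-! ### Sums over the characters modulo a prime power -/

section SumOverCharacters

lemma card_filter_conductor_eq_le {n d : ℕ} [NeZero n] (hd : d ∣ n) :
    Finset.card {χ : DirichletCharacter ℂ n | χ.conductor = d} ≤ d := by
  classical
  have : NeZero d := ⟨ne_zero_of_dvd_ne_zero (NeZero.ne n) hd⟩
  calc Finset.card {χ : DirichletCharacter ℂ n | χ.conductor = d}
      ≤ (Finset.univ.image (DirichletCharacter.changeLevel (R := ℂ) hd)).card := by
        refine Finset.card_le_card fun χ hχ ↦ ?_
        have hfactors := (Finset.mem_filter.1 hχ).2 ▸ χ.factorsThrough_conductor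
        exact Finset.mem_image.2 ⟨hfactors.χ₀, Finset.mem_univ _, hfactors.eq_changeLevel.symm⟩
    _ ≤ Fintype.card (DirichletCharacter ℂ d) := Finset.card_image_le
    _ = d.totient := by
        rw [← Nat.card_eq_fintype_card, DirichletCharacter.card_eq_totient_of_hasEnoughRootsOfUnity]
    _ ≤ d := d.totient_le

lemma sum_conductor_le (n : ℕ) [NeZero n] {g : ℕ → ℝ} (hg : ∀ d, 0 ≤ g d) :
    ∑ χ : DirichletCharacter ℂ n, g χ.conductor ≤ ∑ d ∈ n.divisors, d * g d := by
  rw [← Finset.sum_fiberwise_of_maps_to (s := Finset.univ) (t := n.divisors)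
    fun χ _ ↦ Nat.mem_divisors.2 ⟨DirichletCharacter.conductor_dvd_level χ, NeZero.ne n⟩]
  refine Finset.sum_le_sum fun d hd ↦ ?_
  rw [Finset.sum_congr rfl fun χ hχ ↦ by rw [(Finset.mem_filter.1 hχ).2], Finset.sum_const,
    nsmul_eq_mul]
  gcongr
  · exact hg d
  · exact card_filter_conductor_eq_le (Nat.dvd_of_mem_divisors hd)

variable {p e : ℕ} [Fact p.Prime] [NeZero (p ^ e)]

lemma sum_erase_one_conductor_rpow_neg_le [DecidableEq (DirichletCharacter ℂ (p ^ e))] (s : ℝ) :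
    ∑ χ ∈ Finset.univ.erase (1 : DirichletCharacter ℂ (p ^ e)), (χ.conductor : ℝ) ^ (-s) ≤
      ∑ m ∈ Finset.range e, ((p : ℝ) ^ (1 - s)) ^ (m + 1) := by
  have hp : 1 < p := (Fact.out : p.Prime).one_lt
  let g : ℕ → ℝ := fun d ↦ if d = 1 then 0 else (d : ℝ) ^ (-s)
  have hg (d : ℕ) : 0 ≤ g d := by positivity
  calc ∑ χ ∈ Finset.univ.erase (1 : DirichletCharacter ℂ (p ^ e)), (χ.conductor : ℝ) ^ (-s)
      = ∑ χ ∈ Finset.univ.erase (1 : DirichletCharacter ℂ (p ^ e)), g χ.conductor := by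
        refine Finset.sum_congr rfl fun χ hχ ↦ (if_neg fun h ↦ ?_).symm
        exact Finset.ne_of_mem_erase hχ (DirichletCharacter.eq_one_iff_conductor_eq_one.2 h)
    _ ≤ ∑ χ : DirichletCharacter ℂ (p ^ e), g χ.conductor :=
        Finset.sum_le_sum_of_subset_of_nonneg (Finset.erase_subset _ _) fun χ _ _ ↦ hg _
    _ ≤ ∑ d ∈ (p ^ e).divisors, d * g d := sum_conductor_le _ hg
    _ = ∑ m ∈ Finset.range e, ((p : ℝ) ^ (1 - s)) ^ (m + 1) := by
        rw [Nat.sum_divisors_prime_pow Fact.out, Finset.sum_range_succ']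
        simp only [g, pow_zero, if_true, mul_zero, add_zero]
        refine Finset.sum_congr rfl fun m _ ↦ ?_
        rw [if_neg (Nat.one_lt_pow m.succ_ne_zero hp).ne', Nat.cast_pow, sub_eq_add_neg,
          Real.rpow_add (by positivity), Real.rpow_one, mul_pow, Real.rpow_pow_comm p.cast_nonneg]

lemma sum_erase_one_norm_unitCharSum_pow_le [DecidableEq (DirichletCharacter ℂ (p ^ e))]
    {F : ℤ[X]} {D : ℕ} (hD : (F.map (Int.castRingHom (ZMod p))).natDegree = D) (hD₀ : D ≠ 0)
    (hDp : D < p) (hsep : (F.map (Int.castRingHom (ZMod p))).Separable) (J : ℕ) :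
    ∑ χ ∈ Finset.univ.erase (1 : DirichletCharacter ℂ (p ^ e)), ‖unitCharSum χ F‖ ^ J ≤
      (p ^ e * D) ^ J * ∑ m ∈ Finset.range e, ((p : ℝ) ^ (1 - J / (D + 1) : ℝ)) ^ (m + 1) := by
  refine le_trans ?_ (mul_le_mul_of_nonneg_left (sum_erase_one_conductor_rpow_neg_le _)
    (by positivity))
  rw [Finset.mul_sum]
  refine Finset.sum_le_sum fun χ hχ ↦ ?_
  have hcond : 0 < (χ.conductor : ℝ) :=
    Nat.cast_pos.2 (Nat.pos_of_dvd_of_pos χ.conductor_dvd_level (Nat.pos_of_neZero _))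
  have hexp : ((χ.conductor : ℝ) ^ ((D + 1 : ℕ) : ℝ)⁻¹) ^ J = χ.conductor ^ (J / (D + 1) : ℝ) := by
    rw [← Real.rpow_mul_natCast hcond.le, inv_mul_eq_div, Nat.cast_succ]
  rw [Real.rpow_neg hcond.le, ← div_eq_mul_inv, le_div_iff₀ (by positivity), ← hexp, ← mul_pow]
  exact pow_le_pow_left₀ (by positivity) (norm_unitCharSum_mul_conductor_rpow_le hD hD₀ hDp hsep
    (Finset.ne_of_mem_erase hχ)) J

end SumOverCharacters

lemma rpow_neg_inv_le_one_sub {x : ℝ} (hx : 2 ≤ x) {n : ℕ} (hn : n ≠ 0) :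
    x ^ (-(n : ℝ)⁻¹) ≤ 1 - (2 * n : ℝ)⁻¹ := by
  have hn₁ : (1 : ℝ) ≤ n := mod_cast Nat.one_le_iff_ne_zero.2 hn
  calc x ^ (-(n : ℝ)⁻¹) ≤ 2 ^ (-(n : ℝ)⁻¹) :=
        Real.rpow_le_rpow_of_nonpos two_pos hx (by simp)
    _ = (1 + -2⁻¹) ^ (n : ℝ)⁻¹ := by
        rw [Real.rpow_neg two_pos.le, ← Real.inv_rpow two_pos.le]
        norm_num
    _ ≤ 1 + (n : ℝ)⁻¹ * -2⁻¹ :=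
        rpow_one_add_le_one_add_mul_self (by norm_num) (by positivity) (inv_le_one_of_one_le₀ hn₁)
    _ = 1 - (2 * n : ℝ)⁻¹ := by rw [mul_inv]; ring

lemma geom_sum_mul_le_of_le_one_sub_inv {r c : ℝ} (hr : 0 ≤ r) (hc : 0 < c) (hrc : r ≤ 1 - c⁻¹)
    (e : ℕ) : ∑ m ∈ Finset.range e, r ^ (m + 1) ≤ c * r := by
  have hgeom : c⁻¹ * ∑ m ∈ Finset.range e, r ^ m ≤ 1 :=
    calc c⁻¹ * ∑ m ∈ Finset.range e, r ^ m ≤ (1 - r) * ∑ m ∈ Finset.range e, r ^ m := by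
          gcongr
          linarith
      _ = 1 - r ^ e := mul_neg_geom_sum r e
      _ ≤ 1 := sub_le_self 1 (by positivity)
  rw [inv_mul_le_one₀ hc] at hgeom
  simp only [pow_succ, ← Finset.sum_mul]
  gcongr

/-! ### Counting solutions -/

section Counting

variable {q : ℕ} [NeZero q]

lemma unitCharSum_one (F : ℤ[X]) :
    unitCharSum (1 : DirichletCharacter ℂ q) F =
      Set.ncard {u : (ZMod q)ˣ | IsUnit (aeval (u : ZMod q) F)} := by
  classical
  rw [Set.ncard_eq_toFinset_card', Set.toFinset_ofPred, Finset.card_filter, Nat.cast_sum,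
    unitCharSum]
  refine Finset.sum_congr rfl fun u _ ↦ ?_
  split_ifs with h
  · rw [MulChar.one_apply h, Nat.cast_one]
  · rw [MulChar.map_nonunit _ h, Nat.cast_zero]

lemma totient_mul_alpha (F : ℤ[X]) :
    (q.totient : ℝ) * alpha F q = Set.ncard {u : (ZMod q)ˣ | IsUnit (aeval (u : ZMod q) F)} := by
  have hφ : (q.totient : ℝ) ≠ 0 := Nat.cast_ne_zero.2 (Nat.totient_pos.2 (NeZero.pos q)).ne'
  have hgcd (a : ℕ) : Int.gcd (a * F.eval (a : ℤ)) q = 1 ↔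
      IsUnit (a : ZMod q) ∧ IsUnit (aeval (a : ZMod q) F) := by
    have haeval : aeval (a : ZMod q) F = (F.eval (a : ℤ) : ℤ) := by
      simpa using aeval_algebraMap_apply (ZMod q) (a : ℤ) F
    rw [← IsUnit.mul_iff, haeval, ← Int.cast_natCast (R := ZMod q) a, ← Int.cast_mul,
      ZMod.coe_int_isUnit_iff_isCoprime, isCoprime_comm, Int.isCoprime_iff_gcd_eq_one]
  rw [alpha, mul_div_cancel₀ _ hφ, Nat.cast_inj, eq_comm]
  refine Set.ncard_congr (fun u _ ↦ (u : ZMod q).val) (fun u hu ↦ ?_) (fun u v _ _ h ↦ ?_) ?_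
  · refine ⟨ZMod.val_lt _, (hgcd _).2 ?_⟩
    rw [ZMod.natCast_zmod_val]
    exact ⟨u.isUnit, hu⟩
  · exact Units.ext (ZMod.val_injective q h)
  · rintro a ⟨ha, hcop⟩
    obtain ⟨⟨u, hu⟩, hF⟩ := (hgcd a).1 hcop
    refine ⟨u, show IsUnit _ from hu ▸ hF, ?_⟩
    simp only [hu, ZMod.val_cast_of_lt ha]

lemma totient_mul_ncard_prod_eq {U : Type*} [Fintype U] (g : U → ZMod q) (w : (ZMod q)ˣ) (J : ℕ) :
    (q.totient : ℂ) * Set.ncard {v : Fin J → U | ∏ i, g (v i) = w} =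
      ∑ χ : DirichletCharacter ℂ q, χ (w : ZMod q)⁻¹ * (∑ u, χ (g u)) ^ J := by
  classical
  have hexpand (χ : DirichletCharacter ℂ q) : χ (w : ZMod q)⁻¹ * (∑ u, χ (g u)) ^ J =
      ∑ v : Fin J → U, χ (w : ZMod q)⁻¹ * χ (∏ i, g (v i)) := by
    simp only [Fintype.sum_pow, Finset.mul_sum, map_prod]
  simp only [hexpand]
  rw [Finset.sum_comm]
  simp only [DirichletCharacter.sum_char_inv_mul_char_eq ℂ w.isUnit]
  rw [← Finset.sum_filter, Finset.sum_const, nsmul_eq_mul, mul_comm,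
    Set.ncard_eq_toFinset_card', Set.toFinset_ofPred]
  simp only [eq_comm]

end Counting

section Density

variable {p : ℕ} [Fact p.Prime] {F : ℤ[X]}

lemma le_two_mul_ncard_isUnit_aeval
    (hF : 2 * (F.map (Int.castRingHom (ZMod p))).natDegree + 1 < p)
    (hF₀ : F.map (Int.castRingHom (ZMod p)) ≠ 0) :
    p ≤ 2 * Set.ncard {u : (ZMod p)ˣ | IsUnit (aeval (u : ZMod p) F)} := by
  classical
  have hroots : Set.ncard {u : (ZMod p)ˣ | IsUnit (aeval (u : ZMod p) F)}ᶜ ≤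
      (F.map (Int.castRingHom (ZMod p))).natDegree := by
    refine (Set.ncard_le_ncard_of_injOn (t := (F.map (Int.castRingHom (ZMod p))).roots.toFinset)
      Units.val (fun u hu ↦ ?_) Units.val_injective.injOn).trans ?_
    · simpa [hF₀, aeval_eq_eval_map_castRingHom] using hu
    · rw [Set.ncard_coe_finset]
      exact (Multiset.toFinset_card_le _).trans (card_roots' _)
  have hcompl := Set.ncard_add_ncard_compl {u : (ZMod p)ˣ | IsUnit (aeval (u : ZMod p) F)}
  rw [Nat.card_eq_fintype_card, ZMod.card_units] at hcompl
  lia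

lemma pow_le_two_mul_totient_mul_alpha {e : ℕ} [NeZero (p ^ e)] (he : e ≠ 0)
    (hF : 2 * (F.map (Int.castRingHom (ZMod p))).natDegree + 1 < p)
    (hF₀ : F.map (Int.castRingHom (ZMod p)) ≠ 0) :
    (p : ℝ) ^ e ≤ 2 * ((p ^ e).totient * alpha F (p ^ e)) := by
  have hp : 0 < p := (Fact.out : p.Prime).pos
  have hfibre := mul_unitCharSum_changeLevel (p := p) he 1 F
  rw [DirichletCharacter.changeLevel_one, unitCharSum_one, unitCharSum_one] at hfibre
  norm_cast at hfibre
  rw [totient_mul_alpha]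
  norm_cast
  refine Nat.le_of_mul_le_mul_left ?_ hp
  calc p * p ^ e = p ^ e * p := mul_comm _ _
    _ ≤ p ^ e * (2 * Set.ncard {u : (ZMod p)ˣ | IsUnit (aeval (u : ZMod p) F)}) := by
        gcongr
        exact le_two_mul_ncard_isUnit_aeval hF hF₀
    _ = p * (2 * Set.ncard {u : (ZMod (p ^ e))ˣ | IsUnit (aeval (u : ZMod (p ^ e)) F)}) := by
        rw [mul_left_comm, ← hfibre, mul_left_comm]

end Density

lemma sum_range_rpow_pow_le {x : ℝ} (hx : 2 ≤ x) {D J : ℕ} (hJ : D + 2 ≤ J) (e : ℕ) :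
    ∑ m ∈ Finset.range e, (x ^ (1 - J / (D + 1) : ℝ)) ^ (m + 1) ≤
      2 * 2 ^ J * x ^ (1 - J / (D + 1) : ℝ) := by
  have hexp : (1 - J / (D + 1) : ℝ) ≤ -((D + 1 : ℕ) : ℝ)⁻¹ := by
    have hJ' : (D + 2 : ℝ) ≤ J := mod_cast hJ
    push_cast
    rw [← sub_nonneg]
    field_simp
    linarith
  have hr : x ^ (1 - J / (D + 1) : ℝ) ≤ 1 - (2 * (D + 1 : ℕ) : ℝ)⁻¹ :=
    (Real.rpow_le_rpow_of_exponent_le (by linarith) hexp).trans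
      (rpow_neg_inv_le_one_sub hx D.succ_ne_zero)
  refine (geom_sum_mul_le_of_le_one_sub_inv (by positivity) (by positivity) hr e).trans ?_
  have hDJ : D + 1 ≤ 2 ^ J := (by lia : D + 1 ≤ J).trans J.lt_two_pow_self.le
  gcongr
  exact_mod_cast hDJ

lemma abs_totient_mul_ncard_sub_le {q : ℕ} [NeZero q]
    [DecidableEq (DirichletCharacter ℂ q)] (F : ℤ[X]) (w : (ZMod q)ˣ) (J : ℕ) :
    |(q.totient : ℝ) * Set.ncard {v : Fin J → (ZMod q)ˣ | ∏ i, aeval (v i : ZMod q) F = w} -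
      (q.totient * alpha F q) ^ J| ≤
      ∑ χ ∈ Finset.univ.erase (1 : DirichletCharacter ℂ q), ‖unitCharSum χ F‖ ^ J := by
  have hcount := totient_mul_ncard_prod_eq (fun u : (ZMod q)ˣ ↦ aeval (u : ZMod q) F) w J
  have hw : IsUnit (w : ZMod q)⁻¹ := ZMod.inv_coe_unit w ▸ Units.isUnit _
  rw [← Finset.add_sum_erase _ _ (Finset.mem_univ 1), MulChar.one_apply hw, one_mul] at hcount
  change _ = unitCharSum 1 F ^ J + _ at hcount
  rw [unitCharSum_one] at hcount
  rw [totient_mul_alpha, ← Real.norm_eq_abs, ← Complex.norm_real]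
  push_cast
  rw [hcount, add_sub_cancel_left]
  refine norm_sum_le_of_le _ fun χ _ ↦ ?_
  rw [norm_mul, norm_pow]
  exact mul_le_of_le_one_left (by positivity) (χ.norm_le_one _)

theorem stmt15_general (F : ℤ[X]) (D ℓ : ℕ) (hℓ : ℓ.Prime)
    (hD : (F.map (Int.castRingHom (ZMod ℓ))).natDegree = D) (hD₀ : 0 < D) (hℓD : 2 * D + 1 < ℓ)
    (hsep : (F.map (Int.castRingHom (ZMod ℓ))).Separable)
    (e J : ℕ) (he : 1 ≤ e) (hJ : D + 2 ≤ J) (w : (ZMod (ℓ ^ e))ˣ) :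
    |(Nat.totient (ℓ ^ e) : ℝ) *
        (Set.ncard {v : Fin J → (ZMod (ℓ ^ e))ˣ |
          ∏ i, (F.map (Int.castRingHom (ZMod (ℓ ^ e)))).eval
              ((v i : (ZMod (ℓ ^ e))ˣ) : ZMod (ℓ ^ e)) = (w : ZMod (ℓ ^ e))} : ℝ)
      - ((Nat.totient (ℓ ^ e) : ℝ) * alpha F (ℓ ^ e)) ^ J|
      ≤ 2 * (4 * (D : ℝ)) ^ J * (ℓ : ℝ) ^ ((1 : ℝ) - (J : ℝ) / ((D : ℝ) + 1))
          * ((Nat.totient (ℓ ^ e) : ℝ) * alpha F (ℓ ^ e)) ^ J := by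
  classical
  have : Fact ℓ.Prime := ⟨hℓ⟩
  have hℓ₂ : (2 : ℝ) ≤ ℓ := mod_cast hℓ.two_le
  have : NeZero (ℓ ^ e) := ⟨pow_ne_zero e hℓ.ne_zero⟩
  simp only [← aeval_eq_eval_map_castRingHom]
  have hdensity := pow_le_two_mul_totient_mul_alpha (e := e) (Nat.one_le_iff_ne_zero.1 he)
    (hD ▸ hℓD) hsep.ne_zero
  calc _ ≤ ∑ χ ∈ Finset.univ.erase (1 : DirichletCharacter ℂ (ℓ ^ e)), ‖unitCharSum χ F‖ ^ J :=
        abs_totient_mul_ncard_sub_le F w J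
    _ ≤ (ℓ ^ e * D) ^ J *
          ∑ m ∈ Finset.range e, ((ℓ : ℝ) ^ (1 - J / (D + 1) : ℝ)) ^ (m + 1) :=
        sum_erase_one_norm_unitCharSum_pow_le hD hD₀.ne' (by lia) hsep J
    _ ≤ (2 * ((ℓ ^ e).totient * alpha F (ℓ ^ e)) * D) ^ J *
          (2 * 2 ^ J * (ℓ : ℝ) ^ (1 - J / (D + 1) : ℝ)) := by
        have hA : 0 ≤ (ℓ ^ e).totient * alpha F (ℓ ^ e) := by rw [totient_mul_alpha]; positivity
        have := sum_range_rpow_pow_le hℓ₂ hJ e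
        gcongr
    _ = _ := by
        rw [show (4 : ℝ) = 2 * 2 by norm_num]
        simp only [mul_pow]
        ring

/-- **Equation (5.2) of §5.** Let `F ∈ ℤ[T]` be nonconstant of degree `D` with no multiple
roots. Let `ℓ > 2D+1` be an odd prime dividing neither the leading coefficient of `F` nor the
discriminant of `T·F(T)` (of `F` itself when `F(0) = 0`); the latter condition, given
`ℓ ∤ lc(F)`, is expressed by requiring the reduction of `T·F(T)` (resp. `F`) mod `ℓ` to be
separable. Then for `e ≥ 1`, `J ≥ D+2`, and any unit `w` mod `ℓ^e`, the count `V` of tuples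
`(v₁, …, v_J)` of units mod `ℓ^e` with `∏ F(vᵢ) ≡ w (mod ℓ^e)` satisfies
`|φ(ℓ^e) V − (φ(ℓ^e) α(ℓ^e))^J| ≤ 2 (4D)^J ℓ^{1 - J/(D+1)} (φ(ℓ^e) α(ℓ^e))^J`. -/
theorem stmt15 (F : Polynomial ℤ) (D : ℕ) (hD : D = F.natDegree) (hFdeg : 0 < D)
    (hFsep : Squarefree (F.map (Int.castRingHom ℚ)))
    (ℓ : ℕ) (hℓ : ℓ.Prime) (hodd : ℓ ≠ 2) (hℓD : 2 * D + 1 < ℓ)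
    (hlc : ¬ (ℓ : ℤ) ∣ F.leadingCoeff)
    (hdisc : Polynomial.Separable
      (if F.eval 0 = 0 then F.map (Int.castRingHom (ZMod ℓ))
       else Polynomial.X * F.map (Int.castRingHom (ZMod ℓ))))
    (e J : ℕ) (he : 1 ≤ e) (hJ : D + 2 ≤ J) (w : (ZMod (ℓ ^ e))ˣ) :
    |(Nat.totient (ℓ ^ e) : ℝ) *
        (Set.ncard {v : Fin J → (ZMod (ℓ ^ e))ˣ |
          ∏ i, (F.map (Int.castRingHom (ZMod (ℓ ^ e)))).eval
              ((v i : (ZMod (ℓ ^ e))ˣ) : ZMod (ℓ ^ e)) = (w : ZMod (ℓ ^ e))} : ℝ)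
      - ((Nat.totient (ℓ ^ e) : ℝ) * alpha F (ℓ ^ e)) ^ J|
      ≤ 2 * (4 * (D : ℝ)) ^ J * (ℓ : ℝ) ^ ((1 : ℝ) - (J : ℝ) / ((D : ℝ) + 1))
          * ((Nat.totient (ℓ ^ e) : ℝ) * alpha F (ℓ ^ e)) ^ J := by
  have hdeg := natDegree_map_of_leadingCoeff_ne_zero (Int.castRingHom (ZMod ℓ))
    (mt (ZMod.intCast_zmod_eq_zero_iff_dvd _ _).1 hlc)
  refine stmt15_general F D ℓ hℓ (hdeg.trans hD.symm) hFdeg hℓD ?_ e J he hJ w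
  split_ifs at hdisc
  exacts [hdisc, hdisc.of_mul_right]
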